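/- arXiv:0712.0123 — 5 statements merged into one kernel-verified Lean document; each statement's English description precedes it below -/
import Mathlib

section
/- Let R be a commutative coherent ring and let n, m be nonnegative integers. Assume that Ext_R^{n+1}(P, R) = 0 for every finitely presented R-module P (i.e., R is n-FC), and that every flat R-module has projective dimension at most m (i.e., R is m-perfect, equivalently cot.D(R) ≤ m). Then for every R-module M, every R-module Q of finite projective dimension, and every integer j > n + m, one has Ext_R^j(M, Q) = 0. (This is the Ext-vanishing form of the inequality G-gldim(R) ≤ G-wdim(R) + cot.D(R) for coherent rings.) -/
open CategoryTheory

noncomputable section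

universe u

/-- The `j`-th Ext group of the `R`-modules `M` and `N`. -/
def extGroup (R : Type u) [CommRing R] (M N : ModuleCat.{u} R) (j : ℕ) : ModuleCat R :=
  ((Ext R (ModuleCat.{u} R) j).obj (Opposite.op M)).obj N

/-- `Ext_R^j(M, N) = 0`. -/
def ExtVanish (R : Type u) [CommRing R] (M N : ModuleCat.{u} R) (j : ℕ) : Prop :=
  Subsingleton (extGroup R M N j)

/-- The projective dimension of `M` is at most `n`
(via the standard Ext-vanishing characterization). -/
def ProjDimLE (R : Type u) [CommRing R] (M : ModuleCat.{u} R) (n : ℕ) : Prop :=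
  ∀ (N : ModuleCat.{u} R) (j : ℕ), n < j → ExtVanish R M N j

/-- `M` has finite projective dimension. -/
def HasFinProjDim (R : Type u) [CommRing R] (M : ModuleCat.{u} R) : Prop :=
  ∃ n, ProjDimLE R M n

/-- `R` is a coherent ring: every finitely generated ideal is finitely presented. -/
def IsCoherentRing (R : Type u) [CommRing R] : Prop :=
  ∀ I : Ideal R, I.FG → Module.FinitePresentation R I

/-!
Write `N⁺` for the character module of `N`. A module of finite projective dimension is resolved by
finitely many projectives, so it suffices to bound the injective dimension of a flat module `F`.
Over a coherent ring `F⁺⁺` is flat and `F → F⁺⁺` is pure, hence `F⁺⁺/F` is flat too. Dimension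
shifting along `0 → F → F⁺⁺ → F⁺⁺/F → 0` lowers the degree in which `Ext(G, F)` vanishes for flat
`G`, since `Ext(G, F⁺⁺) = 0` in positive degrees; when that degree is `1` the sequence splits.
The modules `F⁺⁺` have injective dimension at most `n`: by Lazard's theorem the vanishing of
`Ext^{n+1}(P, R)` for finitely presented `P` passes to `Ext^{n+1}(P, F⁺⁺)`, and finitely presented
cyclic modules detect the injective dimension of a character module.
-/

universe v w

section CharacterModule

variable {R : Type*} [CommRing R] {A B C E : Type*} [AddCommGroup A] [AddCommGroup B]
  [AddCommGroup C] [AddCommGroup E] [Module R A] [Module R B] [Module R C] [Module R E]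

theorem exact_lcomp_of_baer {f : A →ₗ[R] B} {g : B →ₗ[R] C} (hfg : Function.Exact f g)
    (hE : Module.Baer R E) : Function.Exact (g.lcomp R E) (f.lcomp R E) := by
  intro φ
  constructor
  · intro hφ
    have hker : LinearMap.ker g ≤ LinearMap.ker φ := by
      rw [hfg.linearMap_ker_eq, LinearMap.range_le_ker_iff]
      exact hφ
    obtain ⟨ψ, hψ⟩ := hE.extension_property ((LinearMap.ker g).liftQ g le_rfl)
      (LinearMap.ker_eq_bot.1 (Submodule.ker_liftQ_eq_bot _ _ _ le_rfl))
      ((LinearMap.ker g).liftQ φ hker)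
    exact ⟨ψ, LinearMap.ext fun b ↦ LinearMap.congr_fun hψ (Submodule.Quotient.mk b)⟩
  · rintro ⟨ψ, rfl⟩
    ext a
    simp [hfg.apply_apply_eq_zero]

theorem exact_characterModule_dual {f : A →ₗ[R] B} {g : B →ₗ[R] C} (hfg : Function.Exact f g) :
    Function.Exact (CharacterModule.dual g) (CharacterModule.dual f) := by
  have hfgZ : Function.Exact f.toAddMonoidHom.toIntLinearMap g.toAddMonoidHom.toIntLinearMap := hfg
  intro c
  constructor
  · intro hc
    obtain ⟨d, hd⟩ := (exact_lcomp_of_baer hfgZ (Module.Baer.of_divisible (AddCircle (1 : ℚ)))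
      (AddMonoidHom.toIntLinearMap c)).1 (LinearMap.ext fun a ↦ DFunLike.congr_fun hc a)
    exact ⟨d.toAddMonoidHom, DFunLike.ext _ _ fun b ↦ LinearMap.congr_fun hd b⟩
  · rintro ⟨d, rfl⟩
    rw [← LinearMap.comp_apply, ← CharacterModule.dual_comp, hfg.linearMap_comp_eq_zero,
      CharacterModule.dual_zero, LinearMap.zero_apply]

theorem baer_of_leftInverse (hB : Module.Baer R B) (i : A →ₗ[R] B) (r : B →ₗ[R] A)
    (hri : r ∘ₗ i = LinearMap.id) : Module.Baer R A := by
  intro I φ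
  obtain ⟨ψ, hψ⟩ := hB I (i ∘ₗ φ)
  exact ⟨r ∘ₗ ψ, fun x hx ↦ by simpa [hψ x hx] using LinearMap.congr_fun hri (φ ⟨x, hx⟩)⟩

variable (R A) in
/-- The evaluation map `a ↦ (c ↦ c a)` from a module to its double character module. -/
def toBidual : A →ₗ[R] CharacterModule (CharacterModule A) where
  toFun a := (AddMonoidHom.eval a : (A →+ AddCircle (1 : ℚ)) →+ AddCircle (1 : ℚ))
  map_add' a b := by ext c; exact map_add c a b
  map_smul' _ _ := rfl

theorem characterModule_sum_apply {ι : Type*} (s : Finset ι) (c : ι → CharacterModule A) (a : A) :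
    (∑ i ∈ s, c i) a = ∑ i ∈ s, c i a :=
  map_sum (toBidual ℤ A a) c s

theorem toBidual_injective : Function.Injective (toBidual R A) :=
  (injective_iff_map_eq_zero _).2 fun _ ha ↦
    CharacterModule.eq_zero_of_character_apply fun c ↦ DFunLike.congr_fun ha c

theorem dual_toBidual_comp_toBidual :
    CharacterModule.dual (toBidual R A) ∘ₗ toBidual R (CharacterModule A) = LinearMap.id :=
  rfl

theorem flat_of_exact_of_dual_splits [Module.Flat R B] {f : A →ₗ[R] B} {g : B →ₗ[R] C}
    (hfg : Function.Exact f g) (hg : Function.Surjective g)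
    (s : CharacterModule A →ₗ[R] CharacterModule B)
    (hs : CharacterModule.dual f ∘ₗ s = LinearMap.id) : Module.Flat R C := by
  have hsplit := (exact_characterModule_dual hfg).split_tfae'.out 0 1
  obtain ⟨-, r, hr⟩ := hsplit.1 ⟨CharacterModule.dual_injective_of_surjective g hg, s, hs⟩
  rw [Module.Flat.iff_characterModule_baer]
  exact baer_of_leftInverse (Module.Flat.iff_characterModule_baer.1 ‹Module.Flat R B›) _ r hr

end CharacterModule

section Flat

variable {R : Type*} [CommRing R] {K P G : Type*} [AddCommGroup K] [AddCommGroup P]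
  [AddCommGroup G] [Module R K] [Module R P] [Module R G] {i : K →ₗ[R] P} {p : P →ₗ[R] G}

theorem lcomp_characterModule_surjective_of_flat [Module.Flat R G] (hip : Function.Exact i p)
    (hi : Function.Injective i) (hp : Function.Surjective p)
    (N : Type*) [AddCommGroup N] [Module R N] :
    Function.Surjective (i.lcomp R (CharacterModule N)) := by
  rw [← rTensor_injective_iff_lcomp_surjective, ← LinearMap.lTensor_inj_iff_rTensor_inj]
  exact LinearMap.lTensor_injective_of_exact_of_flat p hp i hi hip N

theorem flat_of_exact_of_flat [Module.Flat R G] [Module.Flat R P] (hip : Function.Exact i p)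
    (hi : Function.Injective i) (hp : Function.Surjective p) : Module.Flat R K := by
  rw [Module.Flat.iff_rTensor_injective']
  intro I
  have hcomp : Function.Injective (i.lTensor R ∘ₗ I.subtype.rTensor K) := by
    rw [LinearMap.lTensor_comp_rTensor, ← LinearMap.rTensor_comp_lTensor]
    exact (Module.Flat.rTensor_preserves_injective_linearMap _ I.subtype_injective).comp
      (LinearMap.lTensor_injective_of_exact_of_flat p hp i hi hip I)
  exact Function.Injective.of_comp hcomp

end Flat

section Coherent

variable {R : Type u} [CommRing R]

theorem IsCoherentRing.finitePresentation_range (hcoh : IsCoherentRing R) {M : Type*}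
    [AddCommGroup M] [Module R M] [Module.Finite R M] (φ : M →ₗ[R] R) :
    Module.FinitePresentation R (LinearMap.range φ) :=
  hcoh _ (Submodule.FG.of_finite (N := LinearMap.range φ))

theorem IsCoherentRing.fg_ker (hcoh : IsCoherentRing R) {M : Type*} [AddCommGroup M] [Module R M]
    [Module.Finite R M] (φ : M →ₗ[R] R) : (LinearMap.ker φ).FG := by
  have := hcoh.finitePresentation_range φ
  rw [← LinearMap.ker_rangeRestrict]
  exact Module.FinitePresentation.fg_ker _ φ.surjective_rangeRestrict

theorem IsCoherentRing.exists_exact (hcoh : IsCoherentRing R) {M : Type*} [AddCommGroup M]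
    [Module R M] [Module.Finite R M] (φ : M →ₗ[R] R) :
    ∃ (k : ℕ) (ψ : (Fin k → R) →ₗ[R] M), Function.Exact ψ φ := by
  obtain ⟨k, ψ, hψ⟩ := (Submodule.fg_iff_exists_fin_linearMap R M).1 (hcoh.fg_ker φ)
  exact ⟨k, ψ, LinearMap.exact_iff.2 hψ.symm⟩

theorem eq_sum_smulRight_proj {k : ℕ} {E : Type*} [AddCommGroup E] [Module R E]
    (g : (Fin k → R) →ₗ[R] E) :
    g = ∑ j, (LinearMap.proj j).smulRight (g (Pi.single j 1)) :=
  (Pi.basisFun R (Fin k)).ext fun i ↦ by simp [Pi.single_apply]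

theorem IsCoherentRing.flat_characterModule_of_baer (hcoh : IsCoherentRing R) {E : Type*}
    [AddCommGroup E] [Module R E] (hE : Module.Baer R E) : Module.Flat R (CharacterModule E) := by
  refine Module.Flat.of_forall_isTrivialRelation fun {l f x} hfx ↦ ?_
  let φ := Fintype.linearCombination R f
  obtain ⟨k, ψ, hψφ⟩ := hcoh.exists_exact φ
  -- The relation says that `c` is killed by the dual of `Hom(φ, E)`, so `c` lifts along the dual of
  -- `Hom(ψ, E)`; the lift provides the `y j`.
  let c : CharacterModule ((Fin l → R) →ₗ[R] E) :=
    ∑ i, CharacterModule.dual (LinearMap.applyₗ (Pi.single i 1)) (x i)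
  have hc (g : (Fin l → R) →ₗ[R] E) : c g = ∑ i, x i (g (Pi.single i 1)) :=
    characterModule_sum_apply _ _ g
  have hcφ : CharacterModule.dual (φ.lcomp R E) c = 0 := by
    ext h
    calc c (h ∘ₗ φ) = ∑ i, (f i • x i) (h 1) := by
          simp [hc, φ, Fintype.linearCombination_apply_single, ← map_smul]
      _ = (∑ i, f i • x i) (h 1) := (characterModule_sum_apply _ _ _).symm
      _ = 0 := by rw [hfx]; rfl
  obtain ⟨d, hd⟩ := (exact_characterModule_dual (exact_lcomp_of_baer hψφ hE) c).1 hcφ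
  let y (j : Fin k) : CharacterModule E :=
    CharacterModule.dual (LinearMap.smulRightₗ (LinearMap.proj j)) d
  refine ⟨k, fun i j ↦ ψ (Pi.single j 1) i, y, fun i ↦ ?_, fun j ↦ ?_⟩
  · ext e
    let g : (Fin l → R) →ₗ[R] E := (LinearMap.proj i).smulRight e
    calc x i e = c g := by simp [hc, g, Pi.single_apply, apply_ite]
      _ = d (g ∘ₗ ψ) := (DFunLike.congr_fun hd g).symm
      _ = ∑ j, (ψ (Pi.single j 1) i • y j) e := by
        rw [eq_sum_smulRight_proj (g ∘ₗ ψ), map_sum]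
        rfl
      _ = (∑ j, ψ (Pi.single j 1) i • y j) e := (characterModule_sum_apply _ _ _).symm
  · simpa [φ, Fintype.linearCombination_apply, mul_comm] using
      hψφ.apply_apply_eq_zero (Pi.single j 1)

theorem IsCoherentRing.finitePresentation_of_injective (hcoh : IsCoherentRing R) {k : ℕ}
    {K : Type*} [AddCommGroup K] [Module R K] [Module.Finite R K] {i : K →ₗ[R] (Fin k → R)}
    (hi : Function.Injective i) : Module.FinitePresentation R K := by
  induction k generalizing K with
  | zero =>
    have : Subsingleton K := hi.subsingleton
    infer_instance
  | succ k ih =>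
    let φ : K →ₗ[R] R := LinearMap.proj 0 ∘ₗ i
    let tail : LinearMap.ker φ →ₗ[R] (Fin k → R) :=
      LinearMap.funLeft R R Fin.succ ∘ₗ i ∘ₗ (LinearMap.ker φ).subtype
    have htail : Function.Injective tail := by
      refine (injective_iff_map_eq_zero _).2 fun x hx ↦ Subtype.ext (hi ?_)
      rw [ZeroMemClass.coe_zero, map_zero]
      exact funext (Fin.cases x.2 (congrFun hx))
    have := hcoh.finitePresentation_range φ
    have : Module.Finite R (LinearMap.ker φ) := Module.Finite.of_fg (hcoh.fg_ker φ)
    have : Module.FinitePresentation R (LinearMap.ker φ.rangeRestrict) := by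
      rw [LinearMap.ker_rangeRestrict]
      exact ih htail
    exact Module.finitePresentation_of_ker φ.rangeRestrict φ.surjective_rangeRestrict

end Coherent

section ShortExact

open Abelian

variable {C : Type*} [Category.{v} C] [Abelian C]

section Ext

variable [HasExt.{w} C] {S : ShortComplex C}

theorem exists_comp_eq_of_subsingleton_ext_one (hS : S.ShortExact) {Y : C}
    (h : Subsingleton (Ext.{w} S.X₃ Y 1)) (f : S.X₁ ⟶ Y) : ∃ g : S.X₂ ⟶ Y, S.f ≫ g = f := by
  obtain ⟨φ, hφ⟩ := Ext.contravariant_sequence_exact₁ hS _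
    (Ext.mk₀ f) (add_zero 1) (Subsingleton.elim _ _)
  obtain ⟨g, rfl⟩ := Ext.homEquiv₀.symm.surjective φ
  exact ⟨g, Ext.homEquiv₀.symm.injective (by simpa using hφ)⟩

theorem subsingleton_ext_one_of_exists_comp_eq (hS : S.ShortExact) [Projective S.X₂] {Y : C}
    (h : ∀ f : S.X₁ ⟶ Y, ∃ g : S.X₂ ⟶ Y, S.f ≫ g = f) : Subsingleton (Ext.{w} S.X₃ Y 1) := by
  refine subsingleton_of_forall_eq 0 fun x ↦ ?_
  obtain ⟨y, rfl⟩ := Ext.contravariant_sequence_exact₃ hS Y x (Ext.eq_zero_of_projective _)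
    (add_zero 1)
  obtain ⟨f, rfl⟩ := Ext.homEquiv₀.symm.surjective y
  obtain ⟨g, rfl⟩ := h f
  rw [Ext.homEquiv₀_symm_apply, ← Ext.mk₀_comp_mk₀]
  exact hS.extClass_comp_assoc _

theorem subsingleton_ext_X₃_iff (hS : S.ShortExact) [Projective S.X₂] {Y : C} (k : ℕ) :
    Subsingleton (Ext.{w} S.X₃ Y (k + 2)) ↔ Subsingleton (Ext.{w} S.X₁ Y (k + 1)) := by
  constructor <;> refine fun h ↦ subsingleton_of_forall_eq 0 fun x ↦ ?_
  · obtain ⟨y, rfl⟩ := Ext.contravariant_sequence_exact₁ hS Y x (add_comm 1 (k + 1))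
      (Subsingleton.elim _ _)
    rw [Ext.eq_zero_of_projective y, Ext.comp_zero]
  · obtain ⟨y, rfl⟩ := Ext.contravariant_sequence_exact₃ hS Y x (Ext.eq_zero_of_projective _)
      (add_comm 1 (k + 1))
    rw [Subsingleton.elim y 0, Ext.comp_zero]

theorem subsingleton_ext_X₃ (hS : S.ShortExact) {M : C} {k : ℕ}
    (h₂ : Subsingleton (Ext.{w} M S.X₂ k)) (h₁ : Subsingleton (Ext.{w} M S.X₁ (k + 1))) :
    Subsingleton (Ext.{w} M S.X₃ k) := by
  refine subsingleton_of_forall_eq 0 fun x ↦ ?_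
  obtain ⟨y, rfl⟩ := Ext.covariant_sequence_exact₃ M hS x rfl (Subsingleton.elim _ _)
  rw [Subsingleton.elim y 0, Ext.zero_comp]

end Ext

theorem hasInjectiveDimensionLT_of_hasProjectiveDimensionLT [EnoughProjectives C] {N : ℕ}
    (h : ∀ P : C, Projective P → HasInjectiveDimensionLT P N) (k : ℕ) (Q : C)
    (hQ : HasProjectiveDimensionLT Q (k + 1)) : HasInjectiveDimensionLT Q N := by
  induction k generalizing Q with
  | zero => exact h Q (projective_iff_hasProjectiveDimensionLT_one.2 hQ)
  | succ k ih =>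
    obtain ⟨p⟩ := EnoughProjectives.presentation Q
    have hS : (ShortComplex.mk _ _ (Limits.kernel.condition p.f)).ShortExact :=
      { exact := ShortComplex.exact_kernel p.f }
    have := ih _ ((hS.hasProjectiveDimensionLT_X₃_iff k p.projective).1 hQ)
    exact hS.hasInjectiveDimensionLT_X₃ N (h p.p p.projective)
      (hasInjectiveDimensionLT_of_ge _ N _ N.le_succ)

end ShortExact

section ExtGroup

variable {R : Type u} [CommRing R]

theorem extVanish_succ_iff {M N : ModuleCat.{u} R} {j : ℕ} :
    ExtVanish R M N (j + 1) ↔ Subsingleton (Abelian.Ext.{u} M N (j + 1)) := by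
  let P := projectiveResolution M
  have cocycle_iff : ExtVanish R M N (j + 1) ↔
      ∀ f : P.complex.X (j + 1) ⟶ N, P.complex.d (j + 2) (j + 1) ≫ f = 0 →
        ∃ g : P.complex.X j ⟶ N, P.complex.d (j + 1) j ≫ g = f := by
    unfold ExtVanish extGroup
    rw [← ModuleCat.isZero_iff_subsingleton, (P.isoExt (R := R) (j + 1) N).isZero_iff,
      ← HomologicalComplex.exactAt_iff_isZero_homology,
      HomologicalComplex.exactAt_iff' _ j (j + 1) (j + 2) (by simp) (by simp),
      ShortComplex.moduleCat_exact_iff]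
    rfl
  rw [cocycle_iff]
  constructor
  · refine fun h ↦ subsingleton_of_forall_eq 0 fun x ↦ ?_
    obtain ⟨f, hf, rfl⟩ := P.extMk_surjective x (j + 2) rfl
    exact (P.extMk_eq_zero_iff f (j + 2) rfl hf j rfl).2 (h f hf)
  · exact fun _ f hf ↦ (P.extMk_eq_zero_iff f (j + 2) rfl hf j rfl).1 (Subsingleton.elim _ _)

theorem ProjDimLE.hasProjectiveDimensionLE {M : ModuleCat.{u} R} {k : ℕ} (h : ProjDimLE R M k) :
    HasProjectiveDimensionLE M k := by
  refine HasProjectiveDimensionLT.mk fun i hi Y e ↦ ?_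
  obtain ⟨i, rfl⟩ := Nat.exists_eq_add_of_le' (show 1 ≤ i by lia)
  have := extVanish_succ_iff.1 (h Y (i + 1) hi)
  exact Subsingleton.elim _ _

theorem extVanish_of_hasInjectiveDimensionLE {M Q : ModuleCat.{u} R} {d j : ℕ}
    (hQ : HasInjectiveDimensionLE Q d) (hj : d < j) : ExtVanish R M Q j := by
  obtain ⟨j, rfl⟩ := Nat.exists_eq_add_of_le' (show 1 ≤ j by lia)
  exact extVanish_succ_iff.2 (HasInjectiveDimensionLT.subsingleton Q (d + 1) (j + 1) hj M)

end ExtGroup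

section ModuleCat

open Abelian

variable {R : Type u} [CommRing R]

theorem function_exact_of_shortExact {S : ShortComplex (ModuleCat.{u} R)} (hS : S.ShortExact) :
    Function.Exact S.f.hom S.g.hom :=
  (ShortComplex.ShortExact.moduleCat_exact_iff_function_exact S).1 hS.exact

theorem subsingleton_ext_characterModule (N : Type u) [AddCommGroup N] [Module R N] (k : ℕ)
    (G : ModuleCat.{u} R) [Module.Flat R G] :
    Subsingleton (Ext.{u} G (ModuleCat.of R (CharacterModule N)) (k + 1)) := by
  induction k generalizing G with
  | zero =>
    have hS := G.shortExact_projectiveShortComplex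
    refine subsingleton_ext_one_of_exists_comp_eq hS fun f ↦ ?_
    obtain ⟨g, hg⟩ := lcomp_characterModule_surjective_of_flat (function_exact_of_shortExact hS)
      hS.moduleCat_injective_f hS.moduleCat_surjective_g N f.hom
    exact ⟨ModuleCat.ofHom g, ModuleCat.hom_ext hg⟩
  | succ k ih =>
    have hS := G.shortExact_projectiveShortComplex
    have : Module.Flat R G.projectiveShortComplex.X₁ :=
      flat_of_exact_of_flat (function_exact_of_shortExact hS) hS.moduleCat_injective_f
        hS.moduleCat_surjective_g
    exact (subsingleton_ext_X₃_iff hS k).2 (ih _)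

theorem IsCoherentRing.exists_shortExact_finitePresentation (hcoh : IsCoherentRing R)
    (M : ModuleCat.{u} R) [Module.FinitePresentation R M] :
    ∃ S : ShortComplex (ModuleCat.{u} R), S.ShortExact ∧ Projective S.X₂ ∧ S.X₃ = M ∧
      Module.FinitePresentation R S.X₁ := by
  obtain ⟨a, p, hp⟩ := Module.Finite.exists_fin' R M
  have : Module.Finite R (LinearMap.ker p) :=
    Module.Finite.of_fg (Module.FinitePresentation.fg_ker p hp)
  exact ⟨p.shortComplexKer, LinearMap.shortExact_shortComplexKer hp,
    ModuleCat.projective_of_free (Pi.basisFun R (Fin a)), rfl,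
    hcoh.finitePresentation_of_injective (LinearMap.ker p).subtype_injective⟩

theorem exists_comp_eq_of_flat {X Y F : ModuleCat.{u} R} [Module.FinitePresentation R X]
    [Module.Flat R F] {i : X ⟶ Y}
    (h : ∀ f : X ⟶ ModuleCat.of R R, ∃ g : Y ⟶ ModuleCat.of R R, i ≫ g = f) (f : X ⟶ F) :
    ∃ g : Y ⟶ F, i ≫ g = f := by
  obtain ⟨c, a, y, hya⟩ := Module.Flat.exists_factorization_of_finitePresentation f.hom
  choose b hb using fun j ↦ h (ModuleCat.ofHom (Finsupp.lapply j ∘ₗ a))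
  let β : Y →ₗ[R] (Fin c →₀ R) :=
    (Finsupp.linearEquivFunOnFinite R R (Fin c)).symm ∘ₗ LinearMap.pi fun j ↦ (b j).hom
  have hβ : β ∘ₗ i.hom = a := by
    ext x j
    exact LinearMap.congr_fun (congrArg ModuleCat.Hom.hom (hb j)) x
  refine ⟨ModuleCat.ofHom (y ∘ₗ β), ModuleCat.hom_ext ?_⟩
  rw [hya, ← hβ]
  rfl

theorem IsCoherentRing.subsingleton_ext_of_flat (hcoh : IsCoherentRing R) {k : ℕ}
    {M : ModuleCat.{u} R} [Module.FinitePresentation R M]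
    (h : Subsingleton (Ext.{u} M (ModuleCat.of R R) (k + 1))) (F : ModuleCat.{u} R)
    [Module.Flat R F] : Subsingleton (Ext.{u} M F (k + 1)) := by
  induction k generalizing M with
  | zero =>
    obtain ⟨S, hS, _, rfl, _⟩ := hcoh.exists_shortExact_finitePresentation M
    exact subsingleton_ext_one_of_exists_comp_eq hS
      (exists_comp_eq_of_flat (exists_comp_eq_of_subsingleton_ext_one hS h))
  | succ k ih =>
    obtain ⟨S, hS, _, rfl, _⟩ := hcoh.exists_shortExact_finitePresentation M
    exact (subsingleton_ext_X₃_iff hS k).2 (ih ((subsingleton_ext_X₃_iff hS k).1 h))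

/-- The short complex of character modules of a short complex of modules. -/
def dualShortComplex (S : ShortComplex (ModuleCat.{u} R)) : ShortComplex (ModuleCat.{u} R) :=
  ModuleCat.shortComplexOfCompEqZero (CharacterModule.dual S.g.hom) (CharacterModule.dual S.f.hom)
    (by rw [← CharacterModule.dual_comp, ← ModuleCat.hom_comp, S.zero, ModuleCat.hom_zero,
      CharacterModule.dual_zero])

theorem dualShortComplex_shortExact {S : ShortComplex (ModuleCat.{u} R)} (hS : S.ShortExact) :
    (dualShortComplex S).ShortExact :=
  ModuleCat.shortComplex_shortExact _ (exact_characterModule_dual (function_exact_of_shortExact hS))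
    (CharacterModule.dual_injective_of_surjective _ hS.moduleCat_surjective_g)
    (CharacterModule.dual_surjective_of_injective _ hS.moduleCat_injective_f)

theorem flat_of_subsingleton_ext_one {N : Type u} [AddCommGroup N] [Module R N]
    (h : ∀ I : Ideal R, I.FG → Subsingleton (Ext.{u} (ModuleCat.of R (R ⧸ I))
      (ModuleCat.of R (CharacterModule N)) 1)) : Module.Flat R N := by
  rw [Module.Flat.iff_rTensor_injective]
  intro I hI
  rw [rTensor_injective_iff_lcomp_surjective]
  intro f
  let S := ModuleCat.shortComplexOfCompEqZero I.subtype (Submodule.mkQ I)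
    (LinearMap.exact_subtype_mkQ I).linearMap_comp_eq_zero
  have hS : S.ShortExact := ModuleCat.shortComplex_shortExact S
    (LinearMap.exact_subtype_mkQ I) I.subtype_injective I.mkQ_surjective
  obtain ⟨g, hg⟩ := exists_comp_eq_of_subsingleton_ext_one hS (h I hI) (ModuleCat.ofHom f)
  exact ⟨g.hom, congrArg ModuleCat.Hom.hom hg⟩

theorem injective_characterModule_of_flat (F : Type u) [AddCommGroup F] [Module R F]
    [Module.Flat R F] : Injective (ModuleCat.of R (CharacterModule F)) :=
  have := Module.Flat.iff_characterModule_injective.1 ‹Module.Flat R F›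
  Module.injective_object_of_injective_module R (CharacterModule F)

theorem hasInjectiveDimensionLE_characterModule {n : ℕ} {N : Type u} [AddCommGroup N] [Module R N]
    (h : ∀ I : Ideal R, I.FG → Subsingleton (Ext.{u} (ModuleCat.of R (R ⧸ I))
      (ModuleCat.of R (CharacterModule N)) (n + 1))) :
    HasInjectiveDimensionLE (ModuleCat.of R (CharacterModule N)) n := by
  induction n generalizing N with
  | zero =>
    have := flat_of_subsingleton_ext_one h
    have := injective_characterModule_of_flat (R := R) N
    infer_instance
  | succ n ih =>
    let T := (ModuleCat.of R N).projectiveShortComplex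
    have hT := dualShortComplex_shortExact (ModuleCat.of R N).shortExact_projectiveShortComplex
    have : Module.Flat R T.X₂ := inferInstance
    have : Injective (dualShortComplex T).X₂ := injective_characterModule_of_flat T.X₂
    refine hT.hasInjectiveDimensionLT_X₁ (n + 1) (ih fun I hI ↦ ?_) inferInstance
    exact subsingleton_ext_X₃ hT
      (HasInjectiveDimensionLT.subsingleton (dualShortComplex T).X₂ 1 (n + 1) (by lia) _) (h I hI)

/-- The short complex `F → F⁺⁺ → F⁺⁺ / F`, where `F⁺⁺` is the double character module of `F`. -/
def bidualShortComplex (F : ModuleCat.{u} R) : ShortComplex (ModuleCat.{u} R) :=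
  ModuleCat.shortComplexOfCompEqZero (toBidual R F) (LinearMap.range (toBidual R F)).mkQ
    (LinearMap.range_mkQ_comp _)

theorem bidualShortComplex_shortExact (F : ModuleCat.{u} R) : (bidualShortComplex F).ShortExact :=
  ModuleCat.shortComplex_shortExact _ (LinearMap.exact_map_mkQ_range _) toBidual_injective
    (Submodule.mkQ_surjective _)

theorem IsCoherentRing.flat_bidual (hcoh : IsCoherentRing R) (F : Type u) [AddCommGroup F]
    [Module R F] [Module.Flat R F] : Module.Flat R (CharacterModule (CharacterModule F)) :=
  hcoh.flat_characterModule_of_baer (Module.Flat.iff_characterModule_baer.1 inferInstance)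

theorem IsCoherentRing.flat_bidualShortComplex_X₃ (hcoh : IsCoherentRing R) (F : ModuleCat.{u} R)
    [Module.Flat R F] : Module.Flat R (bidualShortComplex F).X₃ :=
  have := hcoh.flat_bidual F
  flat_of_exact_of_dual_splits (LinearMap.exact_map_mkQ_range (toBidual R F))
    (Submodule.mkQ_surjective _) (toBidual R (CharacterModule F)) dual_toBidual_comp_toBidual

theorem IsCoherentRing.hasInjectiveDimensionLE_bidual (hcoh : IsCoherentRing R) {n : ℕ}
    (hFC : ∀ P : ModuleCat.{u} R, Module.FinitePresentation R P →
      Subsingleton (Ext.{u} P (ModuleCat.of R R) (n + 1))) (F : ModuleCat.{u} R)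
    [Module.Flat R F] : HasInjectiveDimensionLE (bidualShortComplex F).X₂ n := by
  refine hasInjectiveDimensionLE_characterModule fun I hI ↦ ?_
  have hquot : Module.FinitePresentation R (R ⧸ I) :=
    Module.finitePresentation_of_surjective I.mkQ I.mkQ_surjective (by rwa [Submodule.ker_mkQ])
  have := hcoh.flat_bidual F
  exact hcoh.subsingleton_ext_of_flat (hFC (ModuleCat.of R (R ⧸ I)) hquot) _

theorem IsCoherentRing.hasInjectiveDimensionLE_of_flat (hcoh : IsCoherentRing R) {n k : ℕ}
    (hFC : ∀ P : ModuleCat.{u} R, Module.FinitePresentation R P →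
      Subsingleton (Ext.{u} P (ModuleCat.of R R) (n + 1))) {F : ModuleCat.{u} R} [Module.Flat R F]
    (hF : ∀ G : ModuleCat.{u} R, Module.Flat R G → Subsingleton (Ext.{u} G F (k + 1))) :
    HasInjectiveDimensionLE F (n + k) := by
  induction k generalizing F with
  | zero =>
    have hX₂ := hcoh.hasInjectiveDimensionLE_bidual hFC F
    obtain ⟨r, hr⟩ := exists_comp_eq_of_subsingleton_ext_one (bidualShortComplex_shortExact F)
      (hF _ (hcoh.flat_bidualShortComplex_X₃ F)) (𝟙 F)
    exact Retract.hasInjectiveDimensionLT ⟨_, r, hr⟩ (n + 1)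
  | succ k ih =>
    have hS := bidualShortComplex_shortExact F
    have hX₂ := hcoh.hasInjectiveDimensionLE_bidual hFC F
    have := hcoh.flat_bidualShortComplex_X₃ F
    have hX₃ : HasInjectiveDimensionLE (bidualShortComplex F).X₃ (n + k) :=
      ih fun G hG ↦ subsingleton_ext_X₃ hS (subsingleton_ext_characterModule _ k G) (hF G hG)
    exact hS.hasInjectiveDimensionLT_X₁ (n + k + 1) hX₃
      (hasInjectiveDimensionLT_of_ge _ (n + 1) _ (by lia))

end ModuleCat

theorem stmt0 (R : Type u) [CommRing R] (n m : ℕ)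
    (hcoh : IsCoherentRing R)
    (hFC : ∀ (P : ModuleCat.{u} R), Module.FinitePresentation R P →
      ExtVanish R P (ModuleCat.of R R) (n + 1))
    (hperf : ∀ (F : ModuleCat.{u} R), Module.Flat R F → ProjDimLE R F m) :
    ∀ (M Q : ModuleCat.{u} R), HasFinProjDim R Q →
      ∀ j : ℕ, n + m < j → ExtVanish R M Q j := by
  rintro M Q ⟨k, hQ⟩ j hj
  have flat_injDim (F : ModuleCat.{u} R) [Module.Flat R F] : HasInjectiveDimensionLE F (n + m) :=
    hcoh.hasInjectiveDimensionLE_of_flat (fun P hP ↦ extVanish_succ_iff.1 (hFC P hP))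
      fun G hG ↦ extVanish_succ_iff.1 (hperf G hG F (m + 1) m.lt_succ_self)
  have projective_injDim (P : ModuleCat.{u} R) (hP : Projective P) :
      HasInjectiveDimensionLE P (n + m) :=
    have := (IsProjective.iff_projective P).2 hP
    flat_injDim P
  exact extVanish_of_hasInjectiveDimensionLE (hasInjectiveDimensionLT_of_hasProjectiveDimensionLT
    projective_injDim k Q hQ.hasProjectiveDimensionLE) hj

end
end

section
/- Let R be a commutative coherent ring that is n-FC (Ext_R^{n+1}(P, R) = 0 for every finitely presented R-module P) and m-perfect (every flat R-module has projective dimension at most m), for some nonnegative integers n and m. If M is an R-module such that Ext_R^i(M, Q) = 0 for every integer i ≥ 1 and every R-module Q of finite projective dimension, then there exists a short exact sequence of R-modules 0 → M → P⁰ → G⁰ → 0 in which P⁰ is projective and Ext_R^i(G⁰, Q) = 0 for every integer i ≥ 1 and every R-module Q of finite projective dimension. -/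
open CategoryTheory

noncomputable section

universe u

/-!
Coherence makes arbitrary products of flat modules flat (Chase), so powers of free modules have
projective dimension at most `m`. If `E` is injective, tensor evaluation on finitely presented
modules turns the hypothesis on `R` into `Ext^{n+1}(P, E⁺) = 0` for every finitely presented `P`,
where `(-)⁺` is the character module; by dimension shifting the `n`-th syzygy of `E` is flat, so `E`
has projective dimension at most `n + m`.

Every map from `M` to a module `W` of finite projective dimension factors through a projective
module, because `Ext¹(M, -)` vanishes on the syzygy of `W`. Apply this twice: an embedding of `M`
in an injective module yields an embedding of `M` in a projective `P₁`. By cardinality, every map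
from `M` to a projective module factors through the free module `F` on `M × ℕ`, so the evaluation
`M → F ^ Hom(M, F)` yields a map from `M` to a projective `P₂` through which all maps from `M` to
projective modules factor. The cokernel of `M → P₁ ⊕ P₂` is then the required module.
-/

section ShortExact

universe w

open Abelian

variable {C : Type*} [Category* C] [Abelian C] [HasExt.{w} C] {S : ShortComplex C}

theorem exists_comp_eq_of_subsingleton_ext_X₁ (hS : S.ShortExact) {X : C}
    (h : Subsingleton (Abelian.Ext X S.X₁ 1)) (φ : X ⟶ S.X₃) : ∃ ψ : X ⟶ S.X₂, ψ ≫ S.g = φ := by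
  obtain ⟨y, hy⟩ := Ext.covariant_sequence_exact₃ X hS (Ext.mk₀ φ) (zero_add 1) (h.elim _ _)
  obtain ⟨ψ, rfl⟩ := (Ext.mk₀_bijective X S.X₂).2 y
  rw [Ext.mk₀_comp_mk₀] at hy
  exact ⟨ψ, (Ext.mk₀_bijective X S.X₃).1 hy⟩

theorem exists_comp_eq_of_subsingleton_ext_X₃ (hS : S.ShortExact) {Y : C}
    (h : Subsingleton (Abelian.Ext S.X₃ Y 1)) (φ : S.X₁ ⟶ Y) : ∃ ψ : S.X₂ ⟶ Y, S.f ≫ ψ = φ := by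
  obtain ⟨y, hy⟩ := Ext.contravariant_sequence_exact₁ hS Y (Ext.mk₀ φ) (add_zero 1) (h.elim _ _)
  obtain ⟨ψ, rfl⟩ := (Ext.mk₀_bijective S.X₂ Y).2 y
  rw [Ext.mk₀_comp_mk₀] at hy
  exact ⟨ψ, (Ext.mk₀_bijective S.X₁ Y).1 hy⟩

theorem subsingleton_ext_X₃_one_of_forall_exists_comp_eq (hS : S.ShortExact) [Projective S.X₂]
    {Y : C} (h : ∀ φ : S.X₁ ⟶ Y, ∃ ψ : S.X₂ ⟶ Y, S.f ≫ ψ = φ) :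
    Subsingleton (Abelian.Ext S.X₃ Y 1) := by
  refine subsingleton_of_forall_eq 0 fun x => ?_
  obtain ⟨y, rfl⟩ := Ext.contravariant_sequence_exact₃ hS Y x
    (Ext.eq_zero_of_projective _) (add_zero 1)
  obtain ⟨φ, rfl⟩ := (Ext.mk₀_bijective S.X₁ Y).2 y
  obtain ⟨ψ, rfl⟩ := h φ
  rw [← Ext.mk₀_comp_mk₀, ← Ext.comp_assoc _ _ _ (add_zero 1) (add_zero 0) (add_zero 1),
    hS.extClass_comp, Ext.zero_comp]

theorem subsingleton_ext_X₃_add_two_iff (hS : S.ShortExact) [Projective S.X₂] {Y : C} (i : ℕ) :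
    Subsingleton (Abelian.Ext S.X₃ Y (i + 2)) ↔ Subsingleton (Abelian.Ext S.X₁ Y (i + 1)) := by
  constructor <;> refine fun h => subsingleton_of_forall_eq 0 fun x => ?_
  · obtain ⟨y, rfl⟩ := Ext.contravariant_sequence_exact₁ hS Y x (add_comm 1 (i + 1)) (h.elim _ _)
    rw [Ext.eq_zero_of_projective y, Ext.comp_zero]
  · obtain ⟨y, rfl⟩ := Ext.contravariant_sequence_exact₃ hS Y x
      (Ext.eq_zero_of_projective _) (add_comm 1 (i + 1))
    rw [h.elim y 0, Ext.comp_zero]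

theorem subsingleton_ext_of_X₂_of_X₁ (hS : S.ShortExact) {X : C} {i : ℕ}
    (h₂ : Subsingleton (Abelian.Ext X S.X₂ i)) (h₁ : Subsingleton (Abelian.Ext X S.X₁ (i + 1))) :
    Subsingleton (Abelian.Ext X S.X₃ i) := by
  refine subsingleton_of_forall_eq 0 fun x => ?_
  obtain ⟨y, rfl⟩ := Ext.covariant_sequence_exact₃ X hS x rfl (h₁.elim _ _)
  rw [h₂.elim y 0, Ext.zero_comp]

end ShortExact

section PseudoCoherent

variable {R A B : Type*} [Ring R] [AddCommGroup A] [Module R A] [AddCommGroup B] [Module R B]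

variable (R B) in
/-- A module is pseudo-coherent (in the sense of Bourbaki) if all its finitely generated
submodules are finitely presented; this is the property of a coherent ring which passes from `R`
to the finite free modules `R ^ k`. -/
def IsPseudoCoherent : Prop :=
  ∀ N : Submodule R B, N.FG → Module.FinitePresentation R N

namespace IsPseudoCoherent

theorem finitePresentation_of_injective (hB : IsPseudoCoherent R B) [Module.Finite R A]
    {q : A →ₗ[R] B} (hq : Function.Injective q) : Module.FinitePresentation R A :=
  have := hB (LinearMap.range q) (Module.Finite.iff_fg.1 (Module.Finite.range q))
  Module.FinitePresentation.of_equiv (LinearEquiv.ofInjective q hq).symm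

theorem of_injective (hB : IsPseudoCoherent R B) {q : A →ₗ[R] B} (hq : Function.Injective q) :
    IsPseudoCoherent R A := fun N hN =>
  have : Module.Finite R N := Module.Finite.of_fg hN
  hB.finitePresentation_of_injective (q := q ∘ₗ N.subtype) (hq.comp N.subtype_injective)

theorem fg_ker (hB : IsPseudoCoherent R B) [Module.Finite R A] (p : A →ₗ[R] B) :
    (LinearMap.ker p).FG := by
  have := hB (LinearMap.range p) (Module.Finite.iff_fg.1 (Module.Finite.range p))
  rw [← LinearMap.ker_rangeRestrict]
  exact Module.FinitePresentation.fg_ker p.rangeRestrict p.surjective_rangeRestrict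

theorem of_ker {p : A →ₗ[R] B} (hp : IsPseudoCoherent R (LinearMap.ker p))
    (hB : IsPseudoCoherent R B) : IsPseudoCoherent R A := by
  intro N hN
  have : Module.Finite R N := Module.Finite.of_fg hN
  let p' : N →ₗ[R] B := p ∘ₗ N.subtype
  have : Module.Finite R (LinearMap.ker p'.rangeRestrict) :=
    Module.Finite.of_fg (p'.ker_rangeRestrict.symm ▸ hB.fg_ker p')
  let q : LinearMap.ker p'.rangeRestrict →ₗ[R] LinearMap.ker p :=
    (N.subtype ∘ₗ (LinearMap.ker p'.rangeRestrict).subtype).codRestrict (LinearMap.ker p)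
      fun x => congrArg Subtype.val x.2
  have hq : Function.Injective q := fun x y hxy =>
    Subtype.ext (Subtype.ext (congrArg (LinearMap.ker p).subtype hxy))
  have := hp.finitePresentation_of_injective hq
  have := hB (LinearMap.range p') (Module.Finite.iff_fg.1 (Module.Finite.range p'))
  exact Module.finitePresentation_of_ker p'.rangeRestrict p'.surjective_rangeRestrict

theorem pi_fin (hB : IsPseudoCoherent R B) : ∀ k : ℕ, IsPseudoCoherent R (Fin k → B)
  | 0 => fun _ _ => inferInstance
  | k + 1 => by
    let tail : LinearMap.ker (LinearMap.proj (R := R) (φ := fun _ : Fin (k + 1) => B) 0) →ₗ[R]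
        Fin k → B := LinearMap.funLeft R B Fin.succ ∘ₗ Submodule.subtype _
    have htail : Function.Injective tail := fun x y hxy =>
      Subtype.ext (funext (Fin.cases (x.2.trans y.2.symm) (congrFun hxy)))
    exact of_ker ((hB.pi_fin k).of_injective htail) hB

end IsPseudoCoherent

end PseudoCoherent

namespace IsCoherentRing

variable {R : Type u} [CommRing R]

theorem isPseudoCoherent (hR : IsCoherentRing R) : IsPseudoCoherent R R := hR

theorem exists_relation_generators (hR : IsCoherentRing R) {l : ℕ} (f : Fin l → R) :
    ∃ (c : ℕ) (r : Fin c → Fin l → R), (∀ j, ∑ i, f i * r j i = 0) ∧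
      ∀ s : Fin l → R, ∑ i, f i * s i = 0 → ∃ d : Fin c → R, ∀ i, s i = ∑ j, d j * r j i := by
  have hmem (s : Fin l → R) :
      s ∈ LinearMap.ker (Fintype.linearCombination R f) ↔ ∑ i, f i * s i = 0 := by
    simp [Fintype.linearCombination_apply, mul_comm]
  obtain ⟨c, r, hr⟩ := Submodule.fg_iff_exists_fin_generating_family.1
    (hR.isPseudoCoherent.fg_ker (Fintype.linearCombination R f))
  refine ⟨c, r, fun j => (hmem _).1 (hr ▸ Submodule.subset_span ⟨j, rfl⟩), fun s hs => ?_⟩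
  obtain ⟨d, hd⟩ := Submodule.mem_span_range_iff_exists_fun R |>.1 (hr ▸ (hmem s).2 hs)
  exact ⟨d, fun i => by simp [← hd]⟩

-- Chase: a relation in `∏ M i` is trivialised by finitely many generators of the scalar relations,
-- and these do not depend on the component.
theorem flat_pi (hR : IsCoherentRing R) {ι : Type*} (M : ι → Type*) [∀ i, AddCommGroup (M i)]
    [∀ i, Module R (M i)] [∀ i, Module.Flat R (M i)] : Module.Flat R (∀ i, M i) := by
  refine Module.Flat.of_forall_isTrivialRelation fun {l f x} hfx => ?_
  obtain ⟨c, r, hr, hgen⟩ := hR.exists_relation_generators f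
  have hcomp (i : ι) : ∃ y : Fin c → M i, ∀ t, x t i = ∑ j, r j t • y j := by
    have hi : ∑ t, f t • x t i = 0 := by simpa using congrFun hfx i
    obtain ⟨k, a, z, hz, ha⟩ := Module.Flat.isTrivialRelation_of_sum_smul_eq_zero hi
    choose d hd using fun s => hgen (fun t => a t s) (ha s)
    refine ⟨fun j => ∑ s, d s j • z s, fun t => ?_⟩
    simp_rw [hz t, hd, Finset.sum_smul, Finset.smul_sum, smul_smul, mul_comm]
    exact Finset.sum_comm
  choose y hy using hcomp
  exact ⟨c, fun t j => r j t, fun j i => y i j, fun t => by ext i; simp [hy], hr⟩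

end IsCoherentRing

section InjectiveTensor

open TensorProduct

variable {R : Type u} [CommRing R]

variable {K F I : Type u} [AddCommGroup K] [Module R K] [AddCommGroup F] [Module R F]
  [AddCommGroup I] [Module R I]

theorem exists_comp_eq_of_ker_le_ker [Module.Injective R I] {α : K →ₗ[R] F} {h : K →ₗ[R] I}
    (hle : LinearMap.ker α ≤ LinearMap.ker h) : ∃ z : F →ₗ[R] I, z ∘ₗ α = h := by
  have hinj : Function.Injective ((LinearMap.ker α).liftQ α le_rfl) :=
    LinearMap.ker_eq_bot.1 (Submodule.ker_liftQ_eq_bot' _ _ rfl)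
  obtain ⟨z, hz⟩ := Module.Injective.out _ hinj ((LinearMap.ker α).liftQ h hle)
  exact ⟨z, LinearMap.ext fun x => hz (Submodule.Quotient.mk x)⟩

theorem exists_sum_smul_eq_of_vecMul_eq_zero [Module.Injective R I] {a b : ℕ}
    (A : Matrix (Fin a) (Fin b) R) (w : Fin a → I)
    (h : ∀ ξ : Fin a → R, Matrix.vecMul ξ A = 0 → ∑ i, ξ i • w i = 0) :
    ∃ z : Fin b → I, ∀ i, ∑ j, A i j • z j = w i := by
  obtain ⟨z, hz⟩ := exists_comp_eq_of_ker_le_ker (α := A.vecMulLinear)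
    (h := Fintype.linearCombination R w) h
  have hzi (i : Fin a) : z (A.row i) = w i := by
    simpa using LinearMap.congr_fun hz (Pi.single i 1)
  refine ⟨fun j => z (Pi.basisFun R (Fin b) j), fun i => ?_⟩
  rw [← hzi, ← (Pi.basisFun R (Fin b)).sum_repr (A.row i), map_sum]
  simp only [Pi.basisFun_repr, map_smul, Matrix.row_apply]

theorem exists_comp_eq_of_surjective_of_ker_le_ker {A B C : Type*} [AddCommGroup A] [Module R A]
    [AddCommGroup B] [Module R B] [AddCommGroup C] [Module R C] {g : A →ₗ[R] B}
    (hg : Function.Surjective g) {h : A →ₗ[R] C} (hle : LinearMap.ker g ≤ LinearMap.ker h) :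
    ∃ ξ : B →ₗ[R] C, ξ ∘ₗ g = h :=
  ⟨(LinearMap.ker g).liftQ h hle ∘ₗ (g.quotKerEquivOfSurjective hg).symm,
    LinearMap.ext fun v => by simp⟩

-- In a presentation `R ^ b → R ^ a → K → 0` the functionals on `K` are the `ξ : R ^ a → R` killing
-- the columns of the matrix; as `I` is injective, they detect whether `w ∈ I ^ a` is a combination
-- of these columns.
theorem eq_zero_of_forall_dual_rTensor_eq_zero [Module.FinitePresentation R K]
    [Module.Injective R I] {x : K ⊗[R] I} (hx : ∀ ξ : Module.Dual R K, ξ.rTensor I x = 0) :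
    x = 0 := by
  obtain ⟨a, g, hg⟩ := Module.Finite.exists_fin' R K
  obtain ⟨b, r, hr⟩ := Submodule.fg_iff_exists_fin_generating_family.1
    (Module.FinitePresentation.fg_ker g hg)
  obtain ⟨y, rfl⟩ := LinearMap.rTensor_surjective I hg x
  obtain ⟨w, rfl⟩ := TensorProduct.eq_repr_basis_left (Pi.basisFun R (Fin a)) y
  rw [Finsupp.sum_fintype _ _ (by simp)] at hx ⊢
  have hw (ξ : Fin a → R) (hξ : Matrix.vecMul ξ (Matrix.of r).transpose = 0) :
      ∑ i, ξ i • w i = 0 := by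
    have hle : LinearMap.ker g ≤ LinearMap.ker (Fintype.linearCombination R ξ) := by
      rw [← hr, Submodule.span_le, Set.range_subset_iff]
      intro j
      simpa [Matrix.vecMul, dotProduct, Fintype.linearCombination_apply, mul_comm] using
        congrFun hξ j
    obtain ⟨ξ', hξ'⟩ := exists_comp_eq_of_surjective_of_ker_le_ker hg hle
    have hξx := hx ξ'
    rw [← LinearMap.rTensor_comp_apply, hξ'] at hξx
    simpa using congrArg (TensorProduct.lid R I) hξx
  obtain ⟨z, hz⟩ := exists_sum_smul_eq_of_vecMul_eq_zero _ w hw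
  have hgr (j : Fin b) : g (∑ i, r j i • Pi.basisFun R (Fin a) i) = 0 := by
    have hmem : r j ∈ LinearMap.ker g := hr ▸ Submodule.subset_span ⟨j, rfl⟩
    exact (congrArg g ((Pi.basisFun R (Fin a)).sum_repr (r j))).trans hmem
  simp_rw [← hz, tmul_sum, map_sum]
  rw [Finset.sum_comm]
  refine Finset.sum_eq_zero fun j _ => ?_
  simp_rw [tmul_smul, smul_tmul', ← map_sum, ← sum_tmul, Matrix.transpose_apply, Matrix.of_apply]
  rw [LinearMap.rTensor_tmul, hgr, zero_tmul]

theorem rTensor_injective_of_dual_surjective [Module.FinitePresentation R K] [Module.Injective R I]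
    {i : K →ₗ[R] F} (hi : ∀ ξ : Module.Dual R K, ∃ η : Module.Dual R F, η ∘ₗ i = ξ) :
    Function.Injective (i.rTensor I) := by
  refine (injective_iff_map_eq_zero _).2 fun x hx => eq_zero_of_forall_dual_rTensor_eq_zero ?_
  intro ξ
  obtain ⟨η, rfl⟩ := hi ξ
  rw [LinearMap.rTensor_comp_apply, hx, map_zero]

theorem exists_characterModule_comp_eq [Module.FinitePresentation R K] [Module.Injective R I]
    {i : K →ₗ[R] F} (hi : ∀ ξ : Module.Dual R K, ∃ η : Module.Dual R F, η ∘ₗ i = ξ)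
    (φ : K →ₗ[R] CharacterModule I) : ∃ ψ : F →ₗ[R] CharacterModule I, ψ ∘ₗ i = φ :=
  rTensor_injective_iff_lcomp_surjective.1 (rTensor_injective_of_dual_surjective hi) φ

end InjectiveTensor

section CharacterModule

variable {R : Type u} [CommRing R]

theorem exact_dual_of_exact {A B C : Type*} [AddCommGroup A] [Module R A] [AddCommGroup B]
    [Module R B] [AddCommGroup C] [Module R C] {f : A →ₗ[R] B} {g : B →ₗ[R] C}
    (hfg : Function.Exact f g) (hg : Function.Surjective g) :
    Function.Exact (CharacterModule.dual g) (CharacterModule.dual f) := by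
  refine fun c => ⟨fun hc => ?_, ?_⟩
  · have hker : g.toAddMonoidHom.ker ≤ AddMonoidHom.ker c := fun b hb => by
      obtain ⟨a, rfl⟩ := (hfg b).1 hb
      exact DFunLike.congr_fun hc a
    exact ⟨AddMonoidHom.liftOfSurjective g.toAddMonoidHom hg ⟨c, hker⟩,
      AddMonoidHom.liftOfRightInverse_comp _ _ (Function.rightInverse_surjInv hg) ⟨c, hker⟩⟩
  · rintro ⟨d, rfl⟩
    rw [← LinearMap.comp_apply, ← CharacterModule.dual_comp, hfg.linearMap_comp_eq_zero,
      CharacterModule.dual_zero, LinearMap.zero_apply]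

/-- The short complex `S.X₃⁺ ⟶ S.X₂⁺ ⟶ S.X₁⁺` of character modules, for dimension shifting in the
second argument of `Ext`. -/
def characterShortComplex (S : ShortComplex (ModuleCat.{u} R)) : ShortComplex (ModuleCat.{u} R) :=
  ModuleCat.shortComplexOfCompEqZero (CharacterModule.dual S.g.hom) (CharacterModule.dual S.f.hom)
    (by rw [← CharacterModule.dual_comp, ← ModuleCat.hom_comp, S.zero, ModuleCat.hom_zero,
      CharacterModule.dual_zero])

theorem characterShortComplex_shortExact {S : ShortComplex (ModuleCat.{u} R)} (hS : S.ShortExact) :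
    (characterShortComplex S).ShortExact :=
  ModuleCat.shortComplex_shortExact _
    (exact_dual_of_exact ((ShortComplex.ShortExact.moduleCat_exact_iff_function_exact S).1 hS.exact)
      hS.moduleCat_surjective_g)
    (CharacterModule.dual_injective_of_surjective _ hS.moduleCat_surjective_g)
    (CharacterModule.dual_surjective_of_injective _ hS.moduleCat_injective_f)

theorem flat_of_subsingleton_ext_characterModule {X : ModuleCat.{u} R}
    (h : ∀ P : ModuleCat.{u} R, Module.FinitePresentation R P →
      Subsingleton (Abelian.Ext P (ModuleCat.of R (CharacterModule X)) 1)) : Module.Flat R X := by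
  refine Module.Flat.iff_rTensor_injective.2 fun J hJ =>
    rTensor_injective_iff_lcomp_surjective.2 fun φ => ?_
  have hfp : Module.FinitePresentation R (R ⧸ J) :=
    Module.finitePresentation_of_surjective J.mkQ J.mkQ_surjective (J.ker_mkQ.symm ▸ hJ)
  have hS := ModuleCat.shortComplex_shortExact
    (ModuleCat.shortComplexOfCompEqZero J.subtype J.mkQ
      (LinearMap.exact_subtype_mkQ J).linearMap_comp_eq_zero)
    (LinearMap.exact_subtype_mkQ J) J.subtype_injective J.mkQ_surjective
  obtain ⟨ψ, hψ⟩ := exists_comp_eq_of_subsingleton_ext_X₃ hS (h (.of R (R ⧸ J)) hfp)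
    (ModuleCat.ofHom φ)
  exact ⟨ψ.hom, congrArg ModuleCat.Hom.hom hψ⟩

theorem hasProjectiveDimensionLE_of_subsingleton_ext_characterModule {m : ℕ}
    (hflat : ∀ F : ModuleCat.{u} R, Module.Flat R F → HasProjectiveDimensionLE F m) (k : ℕ) :
    ∀ X : ModuleCat.{u} R, (∀ P : ModuleCat.{u} R, Module.FinitePresentation R P →
      Subsingleton (Abelian.Ext P (ModuleCat.of R (CharacterModule X)) (k + 1))) →
      HasProjectiveDimensionLE X (k + m) := by
  induction k with
  | zero =>
    intro X hX
    rw [zero_add]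
    exact hflat X (flat_of_subsingleton_ext_characterModule hX)
  | succ k ih =>
    intro X hX
    have hS := X.shortExact_projectiveShortComplex
    have hproj : Projective X.projectiveShortComplex.X₂ :=
      (IsProjective.iff_projective _).1 inferInstance
    have hinj : Injective (characterShortComplex X.projectiveShortComplex).X₂ :=
      have := Module.Flat.iff_characterModule_injective.1
        (inferInstance : Module.Flat R X.projectiveShortComplex.X₂)
      Module.injective_object_of_injective_module R _
    have hK := ih X.projectiveShortComplex.X₁ fun P hP =>
      subsingleton_ext_of_X₂_of_X₁ (characterShortComplex_shortExact hS)
        (Abelian.Ext.subsingleton_of_injective _ _ _) (hX P hP)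
    rw [Nat.add_right_comm]
    exact (hS.hasProjectiveDimensionLT_X₃_iff _ hproj).2 hK

end CharacterModule

namespace IsCoherentRing

variable {R : Type u} [CommRing R]

theorem exists_shortExact_of_finitePresentation (hR : IsCoherentRing R) (P : ModuleCat.{u} R)
    [Module.FinitePresentation R P] : ∃ S : ShortComplex (ModuleCat.{u} R), S.ShortExact ∧
      S.X₃ = P ∧ Projective S.X₂ ∧ Module.FinitePresentation R S.X₁ := by
  obtain ⟨k, g, hg⟩ := Module.Finite.exists_fin' R P
  exact ⟨g.shortComplexKer, LinearMap.shortExact_shortComplexKer hg, rfl,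
    (IsProjective.iff_projective _).1 (inferInstance : Module.Projective R (Fin k → R)),
    hR.isPseudoCoherent.pi_fin k _ (Module.FinitePresentation.fg_ker g hg)⟩

theorem subsingleton_ext_characterModule (hR : IsCoherentRing R) {I : Type u} [AddCommGroup I]
    [Module R I] [Module.Injective R I] (i : ℕ) :
    ∀ P : ModuleCat.{u} R, Module.FinitePresentation R P →
      Subsingleton (Abelian.Ext P (ModuleCat.of R R) (i + 1)) →
      Subsingleton (Abelian.Ext P (ModuleCat.of R (CharacterModule I)) (i + 1)) := by
  induction i with
  | zero =>
    intro P _ h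
    obtain ⟨S, hS, rfl, _, _⟩ := hR.exists_shortExact_of_finitePresentation P
    have hdual (ξ : Module.Dual R S.X₁) : ∃ η : Module.Dual R S.X₂, η ∘ₗ S.f.hom = ξ := by
      obtain ⟨η, hη⟩ := exists_comp_eq_of_subsingleton_ext_X₃ hS h (ModuleCat.ofHom ξ)
      exact ⟨η.hom, congrArg ModuleCat.Hom.hom hη⟩
    refine subsingleton_ext_X₃_one_of_forall_exists_comp_eq hS fun φ => ?_
    obtain ⟨ψ, hψ⟩ := exists_characterModule_comp_eq hdual φ.hom
    exact ⟨ModuleCat.ofHom ψ, ModuleCat.hom_ext hψ⟩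
  | succ i ih =>
    intro P _ h
    obtain ⟨S, hS, rfl, _, hS₁⟩ := hR.exists_shortExact_of_finitePresentation P
    rw [subsingleton_ext_X₃_add_two_iff hS] at h ⊢
    exact ih S.X₁ hS₁ h

theorem hasProjectiveDimensionLE_of_injective (hR : IsCoherentRing R) {n m : ℕ}
    (hFC : ∀ P : ModuleCat.{u} R, Module.FinitePresentation R P →
      Subsingleton (Abelian.Ext P (ModuleCat.of R R) (n + 1)))
    (hperf : ∀ F : ModuleCat.{u} R, Module.Flat R F → HasProjectiveDimensionLE F m)
    (E : ModuleCat.{u} R) [Injective E] : HasProjectiveDimensionLE E (n + m) :=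
  have : Module.Injective R E := Module.injective_module_of_injective_object R E
  hasProjectiveDimensionLE_of_subsingleton_ext_characterModule hperf n E fun P hP =>
    hR.subsingleton_ext_characterModule n P hP (hFC P hP)

end IsCoherentRing

theorem exists_injective_iUnion_prod_nat {X S : Type*} {s : X → Set S}
    (hs : ∀ x, (s x).Countable) : ∃ e : (⋃ x, s x) → X × ℕ, Function.Injective e := by
  choose c hc using fun x => Set.countable_iff_exists_injOn.1 (hs x)
  choose w hw using fun t : ⋃ x, s x => Set.mem_iUnion.1 t.2
  refine ⟨fun t => (w t, c (w t) t), fun t t' h => ?_⟩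
  obtain ⟨hwt, hct⟩ := Prod.ext_iff.1 h
  dsimp only at hwt hct
  rw [← hwt] at hct
  exact Subtype.ext (hc (w t) (hw t) (hwt ▸ hw t') hct)

theorem exists_comp_eq_of_finsupp {R M S : Type*} [Semiring R] [AddCommMonoid M] [Module R M]
    (φ : M →ₗ[R] S →₀ R) :
    ∃ (α : M →ₗ[R] M × ℕ →₀ R) (β : (M × ℕ →₀ R) →ₗ[R] S →₀ R), β ∘ₗ α = φ := by
  obtain ⟨e, he⟩ := exists_injective_iUnion_prod_nat fun x => (φ x).support.countable_toSet
  let T := ⋃ x, ((φ x).support : Set S)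
  let φ' : M →ₗ[R] Finsupp.supported R R T :=
    φ.codRestrict _ fun x => Set.subset_iUnion (fun x => ((φ x).support : Set S)) x
  let ε : Finsupp.supported R R T ≃ₗ[R] T →₀ R := Finsupp.supportedEquivFinsupp T
  refine ⟨Finsupp.lmapDomain R R e ∘ₗ ε ∘ₗ φ', (Finsupp.supported R R T).subtype ∘ₗ
    ε.symm.toLinearMap ∘ₗ Finsupp.lcomapDomain e he, LinearMap.ext fun x => ?_⟩
  have hx : ε.symm (Finsupp.comapDomain e (Finsupp.mapDomain e (ε (φ' x))) he.injOn) = φ' x := by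
    rw [Finsupp.comapDomain_mapDomain e he, ε.symm_apply_apply]
  exact congrArg (Finsupp.supported R R T).subtype hx

theorem exists_comp_eq_of_projective {R M Q : Type*} [Semiring R] [AddCommMonoid M] [Module R M]
    [AddCommMonoid Q] [Module R Q] [Module.Projective R Q] (φ : M →ₗ[R] Q) :
    ∃ (α : M →ₗ[R] M × ℕ →₀ R) (β : (M × ℕ →₀ R) →ₗ[R] Q), β ∘ₗ α = φ := by
  obtain ⟨s, hs⟩ := Module.projective_def'.1 (inferInstance : Module.Projective R Q)
  obtain ⟨α, β, hαβ⟩ := exists_comp_eq_of_finsupp (s ∘ₗ φ)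
  exact ⟨α, Finsupp.linearCombination R (id : Q → Q) ∘ₗ β, by
    rw [LinearMap.comp_assoc, hαβ, ← LinearMap.comp_assoc, hs, LinearMap.id_comp]⟩

section FinProjDimAcyclic

open Limits

variable {R : Type u} [CommRing R]

/-- The modules `M` with `Ext_R^i(M, Q) = 0` for all `i ≥ 1` and all `Q` of finite projective
dimension; this is the class in which the cosyzygy of the theorem is sought. -/
def FinProjDimAcyclic (M : ModuleCat.{u} R) : Prop :=
  ∀ (Q : ModuleCat.{u} R) (d : ℕ), HasProjectiveDimensionLE Q d →
    ∀ i : ℕ, Subsingleton (Abelian.Ext M Q (i + 1))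

namespace FinProjDimAcyclic

variable {M : ModuleCat.{u} R}

theorem of_projective (h : ∀ (Q : ModuleCat.{u} R) [Projective Q] (i : ℕ),
    Subsingleton (Abelian.Ext M Q (i + 1))) : FinProjDimAcyclic M := by
  intro Q d
  induction d generalizing Q with
  | zero =>
    intro hQ i
    have := (projective_iff_hasProjectiveDimensionLE_zero Q).2 hQ
    exact h Q i
  | succ d ih =>
    intro hQ i
    have hS := Q.shortExact_projectiveShortComplex
    have hproj : Projective Q.projectiveShortComplex.X₂ :=
      (IsProjective.iff_projective _).1 inferInstance
    exact subsingleton_ext_of_X₂_of_X₁ hS (h _ i)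
      (ih _ ((hS.hasProjectiveDimensionLT_X₃_iff d hproj).1 hQ) (i + 1))

theorem X₃_of_X₁ {S : ShortComplex (ModuleCat.{u} R)} (hS : S.ShortExact) [Projective S.X₂]
    (h₁ : FinProjDimAcyclic S.X₁)
    (hext : ∀ (Q : ModuleCat.{u} R) [Projective Q] (φ : S.X₁ ⟶ Q), ∃ ψ : S.X₂ ⟶ Q, S.f ≫ ψ = φ) :
    FinProjDimAcyclic S.X₃ :=
  of_projective fun Q _ i => match i with
    | 0 => subsingleton_ext_X₃_one_of_forall_exists_comp_eq hS (hext Q)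
    | i + 1 => (subsingleton_ext_X₃_add_two_iff hS i).2
        (h₁ Q 0 ((projective_iff_hasProjectiveDimensionLE_zero Q).1 inferInstance) i)

theorem exists_projective_comp_eq (hM : FinProjDimAcyclic M) {W : ModuleCat.{u} R} {d : ℕ}
    (hW : HasProjectiveDimensionLE W d) (φ : M ⟶ W) :
    ∃ (P : ModuleCat.{u} R) (_ : Projective P) (α : M ⟶ P) (β : P ⟶ W), α ≫ β = φ := by
  have hS := W.shortExact_projectiveShortComplex
  have hproj : Projective W.projectiveShortComplex.X₂ :=
    (IsProjective.iff_projective _).1 inferInstance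
  have hK : HasProjectiveDimensionLE W.projectiveShortComplex.X₁ d :=
    (hS.hasProjectiveDimensionLT_X₃_iff d hproj).1
      (hasProjectiveDimensionLT_of_ge W (d + 1) _ (Nat.le_succ _))
  obtain ⟨ψ, hψ⟩ := exists_comp_eq_of_subsingleton_ext_X₁ hS (hM _ d hK 0) φ
  exact ⟨_, hproj, ψ, _, hψ⟩

theorem exists_mono_projective (hM : FinProjDimAcyclic M)
    (hinj : ∀ E : ModuleCat.{u} R, Injective E → ∃ d, HasProjectiveDimensionLE E d) :
    ∃ (P : ModuleCat.{u} R) (_ : Projective P) (f : M ⟶ P), Mono f := by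
  obtain ⟨d, hd⟩ := hinj (Injective.under M) inferInstance
  obtain ⟨P, hP, f, β, hf⟩ := hM.exists_projective_comp_eq hd (Injective.ι M)
  have : Mono (f ≫ β) := hf ▸ inferInstance
  exact ⟨P, hP, f, mono_of_mono f β⟩

theorem exists_projective_preenvelope (hM : FinProjDimAcyclic M)
    (hpow : ∀ ι κ : Type u, ∃ d, HasProjectiveDimensionLE (ModuleCat.of R (ι → κ →₀ R)) d) :
    ∃ (P : ModuleCat.{u} R) (_ : Projective P) (f : M ⟶ P),
      ∀ (Q : ModuleCat.{u} R) [Projective Q] (φ : M ⟶ Q), ∃ ψ : P ⟶ Q, f ≫ ψ = φ := by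
  obtain ⟨d, hd⟩ := hpow (M →ₗ[R] M × ℕ →₀ R) (M × ℕ)
  obtain ⟨P, hP, f, β, hf⟩ := hM.exists_projective_comp_eq hd
    (ModuleCat.ofHom (LinearMap.pi fun ξ : M →ₗ[R] M × ℕ →₀ R => ξ))
  refine ⟨P, hP, f, fun Q hQ φ => ?_⟩
  have := (IsProjective.iff_projective Q).2 hQ
  obtain ⟨α, γ, hφ⟩ := exists_comp_eq_of_projective φ.hom
  refine ⟨β ≫ ModuleCat.ofHom (γ ∘ₗ LinearMap.proj α), ?_⟩
  rw [← Category.assoc, hf]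
  exact ModuleCat.hom_ext hφ

theorem exists_shortExact (hM : FinProjDimAcyclic M)
    (hinj : ∀ E : ModuleCat.{u} R, Injective E → ∃ d, HasProjectiveDimensionLE E d)
    (hpow : ∀ ι κ : Type u, ∃ d, HasProjectiveDimensionLE (ModuleCat.of R (ι → κ →₀ R)) d) :
    ∃ S : ShortComplex (ModuleCat.{u} R), S.ShortExact ∧ S.X₁ = M ∧ Projective S.X₂ ∧
      FinProjDimAcyclic S.X₃ := by
  obtain ⟨P₁, _, f₁, _⟩ := hM.exists_mono_projective hinj
  obtain ⟨P₂, _, f₂, hf₂⟩ := hM.exists_projective_preenvelope hpow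
  let f : M ⟶ P₁ ⊞ P₂ := biprod.lift f₁ f₂
  have : Mono (f ≫ biprod.fst) := (biprod.lift_fst f₁ f₂).symm ▸ inferInstance
  have : Mono f := mono_of_mono f biprod.fst
  have hS : (ShortComplex.mk f (cokernel.π f) (cokernel.condition f)).ShortExact :=
    { exact := ShortComplex.exact_cokernel f }
  refine ⟨_, hS, rfl, inferInstanceAs (Projective (P₁ ⊞ P₂)), X₃_of_X₁ hS hM fun Q _ φ => ?_⟩
  obtain ⟨ψ, hψ⟩ := hf₂ Q φ
  exact ⟨biprod.snd ≫ ψ, by rw [← Category.assoc, biprod.lift_snd, hψ]⟩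

end FinProjDimAcyclic

end FinProjDimAcyclic

section ExtVanish

variable {R : Type u} [CommRing R]

-- Both groups are the cohomology of `Hom(P, N)` for the same projective resolution `P` of `M`.
theorem extVanish_add_one_iff {M N : ModuleCat.{u} R} (i : ℕ) :
    ExtVanish R M N (i + 1) ↔ Subsingleton (Abelian.Ext M N (i + 1)) := by
  let P : ProjectiveResolution M := Classical.choice HasProjectiveResolution.out
  trans ∀ f : P.complex.X (i + 1) ⟶ N, P.complex.d (i + 2) (i + 1) ≫ f = 0 →
    ∃ g : P.complex.X i ⟶ N, P.complex.d (i + 1) i ≫ g = f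
  · rw [ExtVanish, extGroup, ← ModuleCat.isZero_iff_subsingleton,
      (P.isoExt (R := R) (i + 1) N).isZero_iff, ← HomologicalComplex.exactAt_iff_isZero_homology,
      HomologicalComplex.exactAt_iff' _ i (i + 1) (i + 2) (by simp) (by simp),
      ShortComplex.moduleCat_exact_iff]
    rfl
  · refine ⟨fun h => subsingleton_of_forall_eq 0 fun x => ?_, fun h f hf =>
      (P.extMk_eq_zero_iff f (i + 2) rfl hf i rfl).1 (h.elim _ _)⟩
    obtain ⟨f, hf, rfl⟩ := P.extMk_surjective x (i + 2) rfl
    exact (P.extMk_eq_zero_iff f (i + 2) rfl hf i rfl).2 (h f hf)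

theorem projDimLE_iff {M : ModuleCat.{u} R} {n : ℕ} :
    ProjDimLE R M n ↔ HasProjectiveDimensionLE M n := by
  rw [HasProjectiveDimensionLE, hasProjectiveDimensionLT_iff]
  refine ⟨fun h i hi N e => ?_, fun h N i hi => ?_⟩ <;>
    obtain ⟨i, rfl⟩ := Nat.exists_eq_add_one_of_ne_zero (Nat.ne_zero_of_lt hi)
  · exact ((extVanish_add_one_iff i).1 (h N _ hi)).elim e 0
  · exact (extVanish_add_one_iff i).2 (subsingleton_of_forall_eq 0 fun e => h _ hi e)

theorem finProjDimAcyclic_iff {M : ModuleCat.{u} R} :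
    FinProjDimAcyclic M ↔
      ∀ Q : ModuleCat.{u} R, HasFinProjDim R Q → ∀ i : ℕ, 1 ≤ i → ExtVanish R M Q i := by
  refine ⟨fun h Q ⟨d, hd⟩ i hi => ?_, fun h Q d hd i =>
    (extVanish_add_one_iff i).1 (h Q ⟨d, projDimLE_iff.2 hd⟩ _ (Nat.le_add_left 1 i))⟩
  obtain ⟨i, rfl⟩ := Nat.exists_eq_add_of_le' hi
  exact (extVanish_add_one_iff i).2 (h Q d (projDimLE_iff.1 hd) i)

end ExtVanish

theorem stmt2 (R : Type u) [CommRing R] (n m : ℕ)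
    (hcoh : IsCoherentRing R)
    (hFC : ∀ (P : ModuleCat.{u} R), Module.FinitePresentation R P →
      ExtVanish R P (ModuleCat.of R R) (n + 1))
    (hperf : ∀ (F : ModuleCat.{u} R), Module.Flat R F → ProjDimLE R F m)
    (M : ModuleCat.{u} R)
    (hM : ∀ (Q : ModuleCat.{u} R), HasFinProjDim R Q →
      ∀ i : ℕ, 1 ≤ i → ExtVanish R M Q i) :
    ∃ (P0 G0 : ModuleCat.{u} R) (f : M →ₗ[R] P0) (g : P0 →ₗ[R] G0),
      Module.Projective R P0 ∧
      Function.Injective f ∧ Function.Surjective g ∧ Function.Exact f g ∧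
      ∀ (Q : ModuleCat.{u} R), HasFinProjDim R Q →
        ∀ i : ℕ, 1 ≤ i → ExtVanish R G0 Q i := by
  simp only [extVanish_add_one_iff, projDimLE_iff] at hFC hperf
  have hinj (E : ModuleCat.{u} R) (_ : Injective E) : HasProjectiveDimensionLE E (n + m) :=
    hcoh.hasProjectiveDimensionLE_of_injective hFC hperf E
  have hpow (ι κ : Type u) : HasProjectiveDimensionLE (ModuleCat.of R (ι → κ →₀ R)) m :=
    hperf _ (hcoh.flat_pi _)
  obtain ⟨S, hS, rfl, hproj, hG⟩ := (finProjDimAcyclic_iff.2 hM).exists_shortExact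
    (fun E hE => ⟨_, hinj E hE⟩) (fun ι κ => ⟨_, hpow ι κ⟩)
  exact ⟨S.X₂, S.X₃, S.f.hom, S.g.hom, (IsProjective.iff_projective _).2 hproj,
    hS.moduleCat_injective_f, hS.moduleCat_surjective_g,
    (ShortComplex.ShortExact.moduleCat_exact_iff_function_exact S).1 hS.exact,
    finProjDimAcyclic_iff.1 hG⟩

end
end

section
/- Let R be a commutative ring and let T = R ⋉ R be the trivial extension of R by itself. Then the global cotorsion dimensions of T and of R coincide: for every nonnegative integer n, every flat T-module has projective dimension at most n over T if and only if every flat R-module has projective dimension at most n over R. -/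
open CategoryTheory

noncomputable section

universe u

/-!
Both directions are instances of one principle: if projectivity of flat modules descends along a
ring homomorphism `A → B`, then `A` is `n`-perfect whenever `B` is. The kernel of a free
presentation of a flat module is flat, and the presentation stays exact after base change to `B`, so
dimension shifting over `A` and over `B` reduces a bound on projective dimension to the case of
projectivity.

Descent along `R → T` holds because `R` is a retract of `T`, so that `R ⊗[T] (T ⊗[R] K) ≅ K`.
Descent along `T → R` holds because the kernel is nilpotent: a retraction of the base-changed
inclusion `i` of the kernel of a free presentation lifts to a `T`-linear map `r` with `1 - r ∘ i`
nilpotent, so `r ∘ i` is invertible and the presentation splits.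
-/

open TensorProduct

section ProjectiveDimension

theorem extVanish_succ_iff_forall_exists_d_comp_eq {R : Type u} [CommRing R]
    {M : ModuleCat.{u} R} (P : ProjectiveResolution M) (N : ModuleCat.{u} R) (k : ℕ) :
    ExtVanish R M N (k + 1) ↔
      ∀ f : P.complex.X (k + 1) ⟶ N, P.complex.d (k + 2) (k + 1) ≫ f = 0 →
        ∃ g : P.complex.X k ⟶ N, P.complex.d (k + 1) k ≫ g = f := by
  rw [ExtVanish, extGroup, ← ModuleCat.isZero_iff_subsingleton,
    (P.isoExt (R := R) (k + 1) N).isZero_iff, ← HomologicalComplex.exactAt_iff_isZero_homology,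
    HomologicalComplex.exactAt_iff' _ k (k + 1) (k + 2) (by simp) (by simp),
    ShortComplex.moduleCat_exact_iff]
  rfl

theorem extVanish_succ_iff_subsingleton_ext {R : Type u} [CommRing R] (M N : ModuleCat.{u} R)
    (k : ℕ) : ExtVanish R M N (k + 1) ↔ Subsingleton (Abelian.Ext.{u} M N (k + 1)) := by
  let P := projectiveResolution M
  rw [extVanish_succ_iff_forall_exists_d_comp_eq P]
  constructor
  · intro h
    refine subsingleton_of_forall_eq 0 fun a ↦ ?_
    obtain ⟨f, hf, rfl⟩ := P.extMk_surjective a (k + 2) rfl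
    exact (P.extMk_eq_zero_iff f (k + 2) rfl hf k rfl).2 (h f hf)
  · intro h f hf
    exact (P.extMk_eq_zero_iff f (k + 2) rfl hf k rfl).1 (Subsingleton.elim _ _)

theorem projDimLE_iff_hasProjectiveDimensionLE {R : Type u} [CommRing R] (M : ModuleCat.{u} R)
    (n : ℕ) : ProjDimLE R M n ↔ HasProjectiveDimensionLE M n := by
  constructor
  · refine fun h ↦ (hasProjectiveDimensionLT_iff.{u} M (n + 1)).2 fun i hi N e ↦ ?_
    obtain ⟨k, rfl⟩ := Nat.exists_eq_add_one_of_ne_zero (by omega : i ≠ 0)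
    have := (extVanish_succ_iff_subsingleton_ext M N k).1 (h N _ hi)
    exact Subsingleton.elim _ _
  · intro h N j hj
    obtain ⟨k, rfl⟩ := Nat.exists_eq_add_one_of_ne_zero (by omega : j ≠ 0)
    exact (extVanish_succ_iff_subsingleton_ext M N k).2
      (HasProjectiveDimensionLT.subsingleton M (n + 1) (k + 1) hj N)

theorem hasProjectiveDimensionLE_zero_iff_projective {A M : Type u} [CommRing A] [AddCommGroup M]
    [Module A M] : HasProjectiveDimensionLE (ModuleCat.of A M) 0 ↔ Module.Projective A M := by
  rw [← projective_iff_hasProjectiveDimensionLE_zero, IsProjective.iff_projective]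

theorem hasProjectiveDimensionLE_succ_iff_of_exact {A M P N : Type u} [CommRing A]
    [AddCommGroup M] [AddCommGroup P] [AddCommGroup N] [Module A M] [Module A P] [Module A N]
    [Module.Projective A P] {f : M →ₗ[A] P} {g : P →ₗ[A] N} (hf : Function.Injective f)
    (hg : Function.Surjective g) (hfg : Function.Exact f g) (n : ℕ) :
    HasProjectiveDimensionLE (ModuleCat.of A N) (n + 1) ↔
      HasProjectiveDimensionLE (ModuleCat.of A M) n := by
  let S : ShortComplex (ModuleCat.{u} A) :=
    .mk (ModuleCat.ofHom f) (ModuleCat.ofHom g) (ModuleCat.hom_ext hfg.linearMap_comp_eq_zero)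
  have hS : S.ShortExact :=
    { exact := (ShortComplex.ShortExact.moduleCat_exact_iff_function_exact S).2 hfg
      mono_f := (ModuleCat.mono_iff_injective _).2 hf
      epi_g := (ModuleCat.epi_iff_surjective _).2 hg }
  exact hS.hasProjectiveDimensionLT_X₃_iff n ((IsProjective.iff_projective P).1 inferInstance)

theorem exists_projective_presentation (A : Type u) [CommRing A] (K : Type u) [AddCommGroup K]
    [Module A K] : ∃ (M P : ModuleCat.{u} A) (f : M →ₗ[A] P) (g : P →ₗ[A] K),
      Module.Projective A P ∧ Function.Injective f ∧ Function.Surjective g ∧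
        Function.Exact f g := by
  let g : (K →₀ A) →ₗ[A] K := Finsupp.linearCombination A id
  exact ⟨.of A (LinearMap.ker g), .of A (K →₀ A), (LinearMap.ker g).subtype, g,
    inferInstanceAs (Module.Projective A (K →₀ A)), Submodule.injective_subtype _,
    Finsupp.linearCombination_id_surjective A K, LinearMap.exact_subtype_ker_map g⟩

end ProjectiveDimension

section Flat

theorem flat_of_exact {A M P N : Type*} [CommRing A] [AddCommGroup M] [AddCommGroup P]
    [AddCommGroup N] [Module A M] [Module A P] [Module A N] [Module.Flat A P] [Module.Flat A N]
    {f : M →ₗ[A] P} {g : P →ₗ[A] N} (hf : Function.Injective f) (hg : Function.Surjective g)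
    (hfg : Function.Exact f g) : Module.Flat A M := by
  rw [Module.Flat.iff_lTensor_injective']
  intro I
  have hfI : Function.Injective (f.rTensor I) :=
    (LinearMap.lTensor_inj_iff_rTensor_inj I f).1 <|
      LinearMap.lTensor_injective_of_exact_of_flat g hg f hf hfg I
  have hPI : Function.Injective (I.subtype.lTensor P) :=
    Module.Flat.iff_lTensor_injective'.1 inferInstance I
  have hcomm : f.rTensor A ∘ₗ I.subtype.lTensor M = I.subtype.lTensor P ∘ₗ f.rTensor I := by
    rw [LinearMap.rTensor_comp_lTensor, LinearMap.lTensor_comp_rTensor]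
  refine Function.Injective.of_comp (f := f.rTensor A) ?_
  rw [← LinearMap.coe_comp, hcomm, LinearMap.coe_comp]
  exact hPI.comp hfI

variable {A : Type*} [CommRing A]

theorem isNilpotent_of_range_le_smul_top {M : Type*} [AddCommGroup M] [Module A M] {I : Ideal A}
    (hI : IsNilpotent I) {f : Module.End A M} (hf : LinearMap.range f ≤ I • ⊤) :
    IsNilpotent f := by
  obtain ⟨k, hk⟩ := hI
  have hpow (j : ℕ) : LinearMap.range (f ^ j) ≤ I ^ j • ⊤ := by
    induction j with
    | zero => simp
    | succ j ih =>
      calc LinearMap.range (f ^ (j + 1))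
          = (LinearMap.range f).map (f ^ j) := by
            rw [pow_succ, Module.End.mul_eq_comp, LinearMap.range_comp]
        _ ≤ (I • ⊤ : Submodule A M).map (f ^ j) := Submodule.map_mono hf
        _ = I • LinearMap.range (f ^ j) := by rw [Submodule.map_smul'', Submodule.map_top]
        _ ≤ I • I ^ j • ⊤ := smul_mono_right I ih
        _ = I ^ (j + 1) • ⊤ := by rw [← mul_smul, ← pow_succ']
  refine ⟨k, LinearMap.range_eq_bot.1 (le_bot_iff.1 ?_)⟩
  simpa only [hk, Submodule.zero_eq_bot, Submodule.bot_smul] using hpow k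

variable {B : Type*} [CommRing B] [Algebra A B]

theorem baseChange_injective_of_exact_of_flat {M P N : Type*} [AddCommGroup M] [AddCommGroup P]
    [AddCommGroup N] [Module A M] [Module A P] [Module A N] [Module.Flat A N] {f : M →ₗ[A] P}
    {g : P →ₗ[A] N} (hf : Function.Injective f) (hg : Function.Surjective g)
    (hfg : Function.Exact f g) : Function.Injective (f.baseChange B) := by
  rw [LinearMap.baseChange_eq_ltensor]
  exact LinearMap.lTensor_injective_of_exact_of_flat g hg f hf hfg B

theorem ker_mk_one_eq_ker_algebraMap_smul_top (hAB : Function.Surjective (algebraMap A B))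
    (M : Type*) [AddCommGroup M] [Module A M] :
    LinearMap.ker (TensorProduct.mk A B M 1) = RingHom.ker (algebraMap A B) • ⊤ := by
  set I := RingHom.ker (algebraMap A B)
  have hexact : Function.Exact I.subtype (Algebra.linearMap A B) := fun x ↦ by
    simp [I, RingHom.mem_ker]
  have hmk : TensorProduct.mk A B M 1 =
      (Algebra.linearMap A B).rTensor M ∘ₗ (TensorProduct.lid A M).symm := by
    ext; simp
  rw [hmk, LinearMap.ker_comp, (rTensor_exact M hexact hAB).linearMap_ker_eq,
    ← Ideal.subtype_rTensor_range, LinearMap.range_comp]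
  exact Submodule.comap_equiv_eq_map_symm _ _

theorem exists_comp_eq_id_of_lTensor (hAB : Function.Surjective (algebraMap A B))
    (hI : IsNilpotent (RingHom.ker (algebraMap A B))) {M P : Type*} [AddCommGroup M]
    [AddCommGroup P] [Module A M] [Module A P] [Module.Projective A P] (f : M →ₗ[A] P)
    {ρ : B ⊗[A] P →ₗ[A] B ⊗[A] M} (hρ : ρ ∘ₗ f.lTensor B = .id) :
    ∃ r : P →ₗ[A] M, r ∘ₗ f = .id := by
  obtain ⟨r, hr⟩ := Module.projective_lifting_property (TensorProduct.mk A B M 1)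
    (ρ ∘ₗ TensorProduct.mk A B P 1) (TensorProduct.mk_surjective A M B hAB)
  have hnil : IsNilpotent (1 - r ∘ₗ f : Module.End A M) := by
    refine isNilpotent_of_range_le_smul_top hI ?_
    rintro _ ⟨x, rfl⟩
    have hx : (1 : B) ⊗ₜ[A] r (f x) = 1 ⊗ₜ x :=
      (LinearMap.congr_fun hr (f x)).trans (LinearMap.congr_fun hρ (1 ⊗ₜ x))
    rw [← ker_mk_one_eq_ker_algebraMap_smul_top hAB]
    simp [hx, TensorProduct.tmul_sub]
  have hunit : IsUnit (r ∘ₗ f : Module.End A M) := by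
    simpa using hnil.isUnit_one_sub
  obtain ⟨u, hu⟩ := hunit.exists_left_inv
  exact ⟨u ∘ₗ r, hu⟩

theorem exists_comp_eq_id_of_projective_baseChange (hAB : Function.Surjective (algebraMap A B))
    (hI : IsNilpotent (RingHom.ker (algebraMap A B))) {M P N : Type*} [AddCommGroup M]
    [AddCommGroup P] [AddCommGroup N] [Module A M] [Module A P] [Module A N]
    [Module.Projective A P] [Module.Flat A N] [Module.Projective B (B ⊗[A] N)] {f : M →ₗ[A] P}
    {g : P →ₗ[A] N} (hf : Function.Injective f) (hg : Function.Surjective g)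
    (hfg : Function.Exact f g) : ∃ s : N →ₗ[A] P, g ∘ₗ s = .id := by
  have hfB : Function.Injective (f.baseChange B) := baseChange_injective_of_exact_of_flat hf hg hfg
  have hgB : Function.Surjective (g.baseChange B) := LinearMap.lTensor_surjective B hg
  have hfgB : Function.Exact (f.baseChange B) (g.baseChange B) := lTensor_exact B hfg hg
  obtain ⟨ρ, hρ⟩ := ((hfgB.split_tfae hfB hgB).out 0 1).1
    (Module.projective_lifting_property _ .id hgB)
  have hr : ∃ r : P →ₗ[A] M, r ∘ₗ f = .id :=
    exists_comp_eq_id_of_lTensor hAB hI f (ρ := ρ.restrictScalars A)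
      (LinearMap.ext fun x ↦ LinearMap.congr_fun hρ x)
  exact ((hfg.split_tfae hf hg).out 1 0).1 hr

end Flat

section Descent

/-- Projectivity of flat modules descends along `A → B`: a flat `A`-module is projective as soon as
its base change to `B` is. This is the only input needed to bound the global cotorsion dimension
of `A` by that of `B`. -/
def DescendsFlatProjectivity (A : Type u) (B : Type u) [CommRing A] [CommRing B] [Algebra A B] :
    Prop :=
  ∀ (K : Type u) [AddCommGroup K] [Module A K] [Module.Flat A K],
    Module.Projective B (B ⊗[A] K) → Module.Projective A K

/-- The ring `A` is `n`-perfect, i.e. its global cotorsion dimension is at most `n`: flat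
`A`-modules have projective dimension at most `n`. -/
def IsNPerfect (A : Type u) [CommRing A] (n : ℕ) : Prop :=
  ∀ F : ModuleCat.{u} A, Module.Flat A F → ProjDimLE A F n

variable {A B : Type u} [CommRing A] [CommRing B] [Algebra A B]

theorem hasProjectiveDimensionLE_baseChange_succ_iff_of_exact {M P N : Type u} [AddCommGroup M]
    [AddCommGroup P] [AddCommGroup N] [Module A M] [Module A P] [Module A N]
    [Module.Projective A P] [Module.Flat A N] {f : M →ₗ[A] P} {g : P →ₗ[A] N}
    (hf : Function.Injective f) (hg : Function.Surjective g) (hfg : Function.Exact f g) (n : ℕ) :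
    HasProjectiveDimensionLE (ModuleCat.of B (B ⊗[A] N)) (n + 1) ↔
      HasProjectiveDimensionLE (ModuleCat.of B (B ⊗[A] M)) n :=
  hasProjectiveDimensionLE_succ_iff_of_exact (f := f.baseChange B) (g := g.baseChange B)
    (baseChange_injective_of_exact_of_flat hf hg hfg) (LinearMap.lTensor_surjective B hg)
    (lTensor_exact B hfg hg) n

theorem DescendsFlatProjectivity.hasProjectiveDimensionLE (h : DescendsFlatProjectivity A B)
    (n : ℕ) (K : Type u) [AddCommGroup K] [Module A K] [Module.Flat A K]
    (hK : HasProjectiveDimensionLE (ModuleCat.of B (B ⊗[A] K)) n) :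
    HasProjectiveDimensionLE (ModuleCat.of A K) n := by
  induction n generalizing K with
  | zero =>
    rw [hasProjectiveDimensionLE_zero_iff_projective] at hK ⊢
    exact h K hK
  | succ n ih =>
    obtain ⟨M, P, f, g, _, hf, hg, hfg⟩ := exists_projective_presentation A K
    have := flat_of_exact hf hg hfg
    rw [hasProjectiveDimensionLE_baseChange_succ_iff_of_exact hf hg hfg] at hK
    rw [hasProjectiveDimensionLE_succ_iff_of_exact hf hg hfg]
    exact ih M hK

theorem IsNPerfect.of_descendsFlatProjectivity {n : ℕ} (hB : IsNPerfect B n)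
    (h : DescendsFlatProjectivity A B) : IsNPerfect A n := by
  intro F hF
  rw [projDimLE_iff_hasProjectiveDimensionLE]
  refine h.hasProjectiveDimensionLE n F ?_
  rw [← projDimLE_iff_hasProjectiveDimensionLE]
  exact hB (.of B (B ⊗[A] F)) (inferInstanceAs (Module.Flat B (B ⊗[A] F)))

theorem descendsFlatProjectivity_of_isNilpotent_ker
    (hAB : Function.Surjective (algebraMap A B))
    (hI : IsNilpotent (RingHom.ker (algebraMap A B))) : DescendsFlatProjectivity A B := by
  intro K _ _ _ hK
  obtain ⟨M, P, f, g, _, hf, hg, hfg⟩ := exists_projective_presentation A K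
  obtain ⟨s, hs⟩ := exists_comp_eq_id_of_projective_baseChange hAB hI hf hg hfg
  exact .of_split s g hs

theorem descendsFlatProjectivity_of_retraction [Algebra B A] [IsScalarTower A B A] :
    DescendsFlatProjectivity A B := fun K _ _ _ _ ↦
  .of_equiv ((AlgebraTensorModule.cancelBaseChange A B A A K).trans (TensorProduct.lid A K))

end Descent

theorem stmt4_general {R T : Type u} [CommRing R] [CommRing T] [Algebra R T] (ε : T →ₐ[R] R)
    (hε : IsNilpotent (RingHom.ker ε)) (n : ℕ) :
    (∀ F : ModuleCat.{u} T, Module.Flat T F → ProjDimLE T F n) ↔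
      (∀ F : ModuleCat.{u} R, Module.Flat R F → ProjDimLE R F n) := by
  let := ε.toRingHom.toAlgebra
  have : IsScalarTower R T R := .of_algebraMap_eq fun r ↦ (ε.commutes r).symm
  have hs : Function.Surjective (algebraMap T R) := fun r ↦ ⟨algebraMap R T r, ε.commutes r⟩
  constructor
  · intro h
    exact IsNPerfect.of_descendsFlatProjectivity h descendsFlatProjectivity_of_retraction
  · intro h
    exact IsNPerfect.of_descendsFlatProjectivity h
      (descendsFlatProjectivity_of_isNilpotent_ker hs hε)

theorem stmt4 (R : Type u) [CommRing R] (n : ℕ) :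
    (∀ (F : ModuleCat.{u} (TrivSqZeroExt R R)), Module.Flat (TrivSqZeroExt R R) F →
      ProjDimLE (TrivSqZeroExt R R) F n) ↔
    (∀ (F : ModuleCat.{u} R), Module.Flat R F → ProjDimLE R F n) := by
  exact stmt4_general (TrivSqZeroExt.fstHom R R R) ⟨2, TrivSqZeroExt.kerIdeal_sq R R⟩ n

end
end

section
/- Let R be a nontrivial commutative ring and let T = R ⋉ R be the trivial extension of R by itself. Then T has infinite global dimension: for every nonnegative integer n there exists a T-module whose projective dimension over T exceeds n. -/
open CategoryTheory

noncomputable section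

universe u

/-!
If `x` and `y` are elements of a ring `S` with `Ann x = (y)` and `Ann y = (x)`, then `S ⧸ (x)` has
the periodic free resolution `⋯ ⟶ S ⟶ S ⟶ S` whose differentials are alternately multiplication by
`x` and by `y`, the last one being `x`. All of them vanish under `Hom(-, N)` as soon as `x` and `y`
kill `N`, so that `Ext^n(S ⧸ (x), N) ≅ N` for every `n`. If `(x, y) ≠ S`, taking `N = S ⧸ (x, y)`
shows that `S ⧸ (x)` has infinite projective dimension. In `R ⋉ R` the element `(0, 1)` is its own
partner, and its annihilator `0 × R` is a proper ideal.
-/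

section Abelian

variable {C : Type*} [Category* C] [Abelian C] {M : C}

lemma quasiIsoAt_zero_toSingle₀Equiv_symm {K : ChainComplex C ℕ} {π : K.X 0 ⟶ M} [Epi π]
    {w : K.d 1 0 ≫ π = 0} (hπ : (ShortComplex.mk (K.d 1 0) π w).Exact) :
    QuasiIsoAt ((K.toSingle₀Equiv M).symm ⟨π, w⟩) 0 := by
  rw [ChainComplex.quasiIsoAt₀_iff,
    ShortComplex.quasiIso_iff_of_zeros' _ (K.shape _ _ (by simp)) rfl rfl]
  have hf := K.toSingle₀Equiv_symm_apply_f_zero π w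
  generalize (K.toSingle₀Equiv M).symm ⟨π, w⟩ = f at hf ⊢
  subst hf
  exact ⟨hπ, ‹Epi (f.f 0)›⟩

/-- The projective resolution of `M` given by an exact sequence `⋯ ⟶ K₁ ⟶ K₀ ⟶ M ⟶ 0` with
projective objects `Kₙ` and last map `π`. -/
def projectiveResolutionOfExact (K : ChainComplex C ℕ) [∀ n, Projective (K.X n)]
    {π : K.X 0 ⟶ M} [Epi π] {w : K.d 1 0 ≫ π = 0}
    (hπ : (ShortComplex.mk (K.d 1 0) π w).Exact) (hK : ∀ n, K.ExactAt (n + 1)) :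
    ProjectiveResolution M where
  complex := K
  π := (K.toSingle₀Equiv M).symm ⟨π, w⟩
  quasiIso.quasiIsoAt
    | 0 => quasiIsoAt_zero_toSingle₀Equiv_symm hπ
    | n + 1 => (quasiIsoAt_iff_exactAt' _ _ (ChainComplex.exactAt_succ_single_obj ..)).2 (hK n)

/-- `Ext^n(X, Y) ≅ Hom(P_n, Y)` for a projective resolution `P` of `X` all of whose differentials
become zero under `Hom(-, Y)`; minimal resolutions over a local ring, with `Y` the residue field,
are the model case. -/
def extIsoHomOfDCompEqZero {A : Type*} [Ring A] [Linear A C] [EnoughProjectives C] {X Y : C}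
    (P : ProjectiveResolution X)
    (hd : ∀ i j (f : P.complex.X j ⟶ Y), P.complex.d i j ≫ f = 0) (n : ℕ) :
    ((Ext A C n).obj (Opposite.op X)).obj Y ≅ ModuleCat.of A (P.complex.X n ⟶ Y) :=
  have hd' (i j : ℕ) : (P.complex.linearYonedaObj A Y).d i j = 0 := by
    ext f
    exact hd j i f
  P.isoExt n Y ≪≫ (ShortComplex.HomologyData.ofZeros
    ((P.complex.linearYonedaObj A Y).sc n) (hd' _ _) (hd' _ _)).left.homologyIso

section Periodic

variable {P : C} {φ ψ : P ⟶ P} {wφψ : φ ≫ ψ = 0} {wψφ : ψ ≫ φ = 0}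

/-- The `2`-periodic chain complex `⋯ ⟶ P ⟶ P ⟶ P` with differentials alternately `φ` and `ψ`, the
last one being `ψ`. -/
abbrev periodicComplex (wφψ : φ ≫ ψ = 0) (wψφ : ψ ≫ φ = 0) : ChainComplex C ℕ :=
  HomologicalComplex.alternatingConst P wφψ wψφ fun _ _ => ComplexShape.down_nat_odd_add

lemma periodicComplex_d_comp_eq_zero (wφψ : φ ≫ ψ = 0) (wψφ : ψ ≫ φ = 0) {Y : C}
    (hφ : ∀ f : P ⟶ Y, φ ≫ f = 0) (hψ : ∀ f : P ⟶ Y, ψ ≫ f = 0) (i j : ℕ) (f : P ⟶ Y) :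
    (periodicComplex wφψ wψφ).d i j ≫ f = 0 := by
  change (if _ : _ then if _ : _ then φ else ψ else 0) ≫ f = 0
  split_ifs
  exacts [hφ f, hψ f, Limits.zero_comp]

lemma periodicComplex_exactAt_succ (hφψ : (ShortComplex.mk φ ψ wφψ).Exact)
    (hψφ : (ShortComplex.mk ψ φ wψφ).Exact) (n : ℕ) :
    (periodicComplex wφψ wψφ).ExactAt (n + 1) := by
  rw [HomologicalComplex.exactAt_iff' _ (n + 2) (n + 1) n (by simp) (by simp)]
  rcases (n + 1).even_or_odd with hn | hn
  · exact ShortComplex.exact_of_iso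
      (HomologicalComplex.alternatingConstScIsoEven P wφψ wψφ _ (by simp) (by simp) hn).symm hψφ
  · exact ShortComplex.exact_of_iso
      (HomologicalComplex.alternatingConstScIsoOdd P wφψ wψφ _ (by simp) (by simp) hn).symm hφψ

/-- The `2`-periodic projective resolution `⋯ ⟶ P ⟶ P ⟶ P` of `M`, with differentials alternately
`φ` and `ψ`, the last one being `ψ`, and augmentation `π`. -/
def periodicResolution [Projective P] {π : P ⟶ M} [Epi π] {wψπ : ψ ≫ π = 0}
    (hφψ : (ShortComplex.mk φ ψ wφψ).Exact) (hψφ : (ShortComplex.mk ψ φ wψφ).Exact)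
    (hψπ : (ShortComplex.mk ψ π wψπ).Exact) : ProjectiveResolution M :=
  have (n : ℕ) : Projective ((periodicComplex wφψ wψφ).X n) := ‹Projective P›
  have : Epi (X := (periodicComplex wφψ wψφ).X 0) π := ‹Epi π›
  projectiveResolutionOfExact (periodicComplex wφψ wψφ) (π := π) hψπ
    (periodicComplex_exactAt_succ hφψ hψφ)

end Periodic

end Abelian

/-- An exact pair of zero divisors in the sense of Henriques and Şega: `Ann x = (y)` and
`Ann y = (x)`, written as exactness of the multiplication maps. Unlike theirs, this definition does
not ask `x` and `y` to be nonzero nonunits. -/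
structure IsExactPair {S : Type*} [CommRing S] (x y : S) : Prop where
  exact_mul_left : Function.Exact (y * ·) (x * ·)
  exact_mul_right : Function.Exact (x * ·) (y * ·)

section Quotient

variable {S : Type u} [CommRing S]

lemma smul_id_comp_eq_zero_of_isTorsionBy {x : S} {M N : ModuleCat.{u} S}
    (hN : Module.IsTorsionBy S N x) (f : M ⟶ N) : (x • 𝟙 M) ≫ f = 0 := by
  rw [Linear.smul_comp, Category.id_comp]
  ext m
  exact @hN (f m)

lemma isTorsionBy_quotient_of_mem {I : Ideal S} {x : S} (hx : x ∈ I) :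
    Module.IsTorsionBy S (S ⧸ I) x := by
  rw [Module.isTorsionBy_quotient_iff]
  exact fun z => I.mul_mem_right z hx

/-- The projection `S ⟶ S ⧸ (x)`, as a morphism of modules. -/
abbrev quotientSpanMkQ (x : S) :
    ModuleCat.of S S ⟶ ModuleCat.of S (S ⧸ Ideal.span {x}) :=
  ModuleCat.ofHom (Ideal.span {x}).mkQ

instance (x : S) : Epi (quotientSpanMkQ x) :=
  (ModuleCat.epi_iff_surjective _).2 (Submodule.mkQ_surjective _)

lemma smul_id_comp_quotientSpanMkQ (x : S) :
    (x • 𝟙 (ModuleCat.of S S)) ≫ quotientSpanMkQ x = 0 :=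
  smul_id_comp_eq_zero_of_isTorsionBy
    (isTorsionBy_quotient_of_mem (Ideal.mem_span_singleton_self x)) _

lemma exact_smul_id_quotientSpanMkQ (x : S) :
    (ShortComplex.mk _ _ (smul_id_comp_quotientSpanMkQ x)).Exact := by
  rw [ShortComplex.ShortExact.moduleCat_exact_iff_function_exact]
  intro z
  simp [Ideal.Quotient.eq_zero_iff_mem, Ideal.mem_span_singleton', mul_comm]

end Quotient

namespace IsExactPair

variable {S : Type u} [CommRing S] {x y : S}

lemma symm (h : IsExactPair x y) : IsExactPair y x :=
  ⟨h.exact_mul_right, h.exact_mul_left⟩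

lemma mul_eq_zero (h : IsExactPair x y) : x * y = 0 := by
  simpa using h.exact_mul_left.apply_apply_eq_zero 1

lemma smul_id_comp_smul_id (h : IsExactPair x y) :
    (y • 𝟙 (ModuleCat.of S S)) ≫ (x • 𝟙 (ModuleCat.of S S)) = 0 := by
  simp [smul_smul, h.mul_eq_zero]

lemma exact_smul_id (h : IsExactPair x y) :
    (ShortComplex.mk _ _ h.smul_id_comp_smul_id).Exact := by
  rw [ShortComplex.ShortExact.moduleCat_exact_iff_function_exact]
  exact h.exact_mul_left

/-- The free resolution `⋯ ⟶ S ⟶ S ⟶ S` of `S ⧸ (x)`, with differentials alternately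
multiplication by `y` and by `x`, the last one being `x`. -/
def resolution (h : IsExactPair x y) :
    ProjectiveResolution (ModuleCat.of S (S ⧸ Ideal.span {x})) :=
  periodicResolution h.exact_smul_id h.symm.exact_smul_id (exact_smul_id_quotientSpanMkQ x)

/-- `Ext^n(S ⧸ (x), N) ≅ N` for every module `N` killed by `x` and `y`. -/
def extGroupIso (h : IsExactPair x y) {N : ModuleCat.{u} S} (hx : Module.IsTorsionBy S N x)
    (hy : Module.IsTorsionBy S N y) (n : ℕ) :
    extGroup S (ModuleCat.of S (S ⧸ Ideal.span {x})) N n ≅ N :=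
  let homEquiv : (ModuleCat.of S S ⟶ N) ≃ₗ[S] N :=
    ModuleCat.homLinearEquiv ≪≫ₗ LinearMap.ringLmapEquivSelf S S N
  have hd := periodicComplex_d_comp_eq_zero h.smul_id_comp_smul_id h.symm.smul_id_comp_smul_id
    (smul_id_comp_eq_zero_of_isTorsionBy hy) (smul_id_comp_eq_zero_of_isTorsionBy hx)
  extIsoHomOfDCompEqZero h.resolution hd n ≪≫ homEquiv.toModuleIso

end IsExactPair

section TrivialExtension

open TrivSqZeroExt

variable {R : Type*} [CommRing R]

lemma inr_one_mul_eq_inr_fst (z : TrivSqZeroExt R R) : inr 1 * z = inr z.fst := by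
  ext <;> simp

lemma isExactPair_inr_one : IsExactPair (inr 1 : TrivSqZeroExt R R) (inr 1) := by
  suffices h : Function.Exact (inr (1 : R) * ·) (inr (1 : R) * ·) from ⟨h, h⟩
  intro z
  simp only [inr_one_mul_eq_inr_fst, Set.mem_range]
  constructor
  · intro hz
    have hfst : z.fst = 0 := inr_injective hz
    exact ⟨inl z.snd, by ext <;> simp [hfst]⟩
  · rintro ⟨w, rfl⟩
    simp

lemma span_pair_inr_ne_top [Nontrivial R] {M : Type*} [AddCommGroup M] [Module R M]
    [Module Rᵐᵒᵖ M] [IsCentralScalar R M] (a b : M) :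
    Ideal.span {inr a, (inr b : TrivSqZeroExt R M)} ≠ ⊤ := by
  refine ne_top_of_le_ne_top (RingHom.ker_ne_top (fstHom R R M)) ?_
  simp [Ideal.span_le, Set.pair_subset_iff, RingHom.mem_ker]

end TrivialExtension

theorem stmt6_general {S : Type u} [CommRing S] {x y : S} (h : IsExactPair x y)
    (hxy : Ideal.span {x, y} ≠ ⊤) :
    ¬ HasFinProjDim S (ModuleCat.of S (S ⧸ Ideal.span {x})) := by
  rintro ⟨n, hn⟩
  let N := ModuleCat.of S (S ⧸ Ideal.span {x, y})
  have hExt : Subsingleton (extGroup S (ModuleCat.of S (S ⧸ Ideal.span {x})) N (n + 1)) :=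
    hn N (n + 1) n.lt_succ_self
  have e := h.extGroupIso (N := N)
    (isTorsionBy_quotient_of_mem (Ideal.subset_span (by simp)))
    (isTorsionBy_quotient_of_mem (Ideal.subset_span (by simp))) (n + 1)
  have : Nontrivial N := Ideal.Quotient.nontrivial_iff.2 hxy
  exact not_subsingleton N e.symm.toLinearEquiv.toEquiv.subsingleton

theorem stmt6 (R : Type u) [CommRing R] [Nontrivial R] (n : ℕ) :
    ∃ (M : ModuleCat.{u} (TrivSqZeroExt R R)), ¬ ProjDimLE (TrivSqZeroExt R R) M n :=
  ⟨_, fun h => stmt6_general isExactPair_inr_one (span_pair_inr_ne_top 1 1) ⟨n, h⟩⟩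

end
end

section
/- Let R be a commutative ring and let T = R ⋉ R be the trivial extension of R by itself. Then the self-injective dimension of T equals the self-injective dimension of R: for every nonnegative integer n, one has Ext_T^j(N, T) = 0 for every T-module N and every j > n if and only if Ext_R^j(N', R) = 0 for every R-module N' and every j > n. -/
open CategoryTheory

noncomputable section

universe u

/-!
A trivial extension `T = R ⋉ R` is free over `R`, so restriction of scalars to `R` is an exact left
adjoint that preserves projectives, and `Ext_T^j(N, Hom_R(T, M)) = 0` if and only if
`Ext_R^j(N, M) = 0`. The form `(r, m) ↦ m` identifies `T` with `Hom_R(T, R)`, and the retraction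
`T → R` exhibits every `R`-module as a restricted `T`-module, so the two vanishing conditions range
over the same `R`-modules.
-/

/-- The injective dimension of `M` is at most `n`
(via the standard Ext-vanishing characterization). -/
def InjDimLE (R : Type u) [CommRing R] (M : ModuleCat.{u} R) (n : ℕ) : Prop :=
  ∀ (N : ModuleCat.{u} R) (j : ℕ), n < j → ExtVanish R N M j

section Adjunction

variable {C D : Type*} [Category* C] [Category* D] [Abelian C] [Abelian D]
  (A B : Type*) [Ring A] [Ring B] [Linear A C] [Linear B D]
  [EnoughProjectives C] [EnoughProjectives D]

lemma isZero_ext_iff_exists_d_comp_eq {X : C} (P : ProjectiveResolution X) (Y : C) {i j k : ℕ}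
    (hi : (ComplexShape.up ℕ).prev j = i) (hk : (ComplexShape.up ℕ).next j = k) :
    Limits.IsZero (((Ext A C j).obj (Opposite.op X)).obj Y) ↔
      ∀ f : P.complex.X j ⟶ Y, P.complex.d k j ≫ f = 0 →
        ∃ g : P.complex.X i ⟶ Y, P.complex.d j i ≫ g = f := by
  rw [(P.isoExt (R := A) j Y).isZero_iff, ← HomologicalComplex.exactAt_iff_isZero_homology,
    HomologicalComplex.exactAt_iff' _ i j k hi hk, ShortComplex.moduleCat_exact_iff]
  rfl

lemma isZero_ext_rightAdjoint_iff {F : C ⥤ D} {G : D ⥤ C} (adj : F ⊣ G) [F.Additive]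
    [F.PreservesProjectiveObjects] [F.PreservesHomology] (X : C) (Y : D) (j : ℕ) :
    Limits.IsZero (((Ext A C j).obj (Opposite.op X)).obj (G.obj Y)) ↔
      Limits.IsZero (((Ext B D j).obj (Opposite.op (F.obj X))).obj Y) := by
  let P := projectiveResolution X
  rw [isZero_ext_iff_exists_d_comp_eq A P (G.obj Y) rfl rfl,
    isZero_ext_iff_exists_d_comp_eq B (F.mapProjectiveResolution P) Y rfl rfl,
    ← (adj.homEquiv _ _).forall_congr_right]
  refine forall_congr' fun f ↦ imp_congr ?_ ?_
  · rw [← adj.homEquiv_naturality_left, adj.homEquiv_apply_eq, adj.homAddEquiv_symm_zero]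
    rfl
  · rw [← (adj.homEquiv _ _).exists_congr_right]
    refine exists_congr fun g ↦ ?_
    rw [← adj.homEquiv_naturality_left, (adj.homEquiv _ _).apply_eq_iff_eq]
    rfl

end Adjunction

section ExtVanish

variable {R : Type u} [CommRing R]

lemma extVanish_iff_isZero {M N : ModuleCat.{u} R} {j : ℕ} :
    ExtVanish R M N j ↔ Limits.IsZero (((Ext R (ModuleCat.{u} R) j).obj (Opposite.op M)).obj N) :=
  ModuleCat.isZero_iff_subsingleton.symm

lemma extVanish_congr {M M' N N' : ModuleCat.{u} R} (e : M ≅ M') (e' : N ≅ N') (j : ℕ) :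
    ExtVanish R M N j ↔ ExtVanish R M' N' j := by
  let E := Ext R (ModuleCat.{u} R) j
  rw [extVanish_iff_isZero, extVanish_iff_isZero]
  exact ((E.mapIso e.symm.op).app N ≪≫ (E.obj (Opposite.op M')).mapIso e').isZero_iff

lemma injDimLE_congr {M M' : ModuleCat.{u} R} (e : M ≅ M') (n : ℕ) :
    InjDimLE R M n ↔ InjDimLE R M' n :=
  forall₃_congr fun N j _ ↦ extVanish_congr (Iso.refl N) e j

end ExtVanish

section ChangeOfRings

open ModuleCat

variable {R S : Type u} [CommRing R] [CommRing S] [Algebra R S]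

variable (R S) in
/-- The identity of `S`, from its `R`-algebra structure to the restriction of the `S`-module `S`.
The two `R`-module structures agree only propositionally. -/
def restrictScalarsSelfEquiv : S ≃ₗ[R] (restrictScalars (algebraMap R S)).obj (of S S) where
  __ := AddEquiv.refl S
  map_smul' := Algebra.smul_def

instance projective_restrictScalars_self [Module.Projective R S] :
    Module.Projective R ((restrictScalars (algebraMap R S)).obj (of S S)) :=
  .of_equiv (restrictScalarsSelfEquiv R S)

instance coextendScalars_preservesEpimorphisms [Module.Projective R S] :
    (coextendScalars.{u, u, u} (algebraMap R S)).PreservesEpimorphisms where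
  preserves {M N} p hp := by
    rw [ModuleCat.epi_iff_surjective] at hp ⊢
    intro φ
    obtain ⟨ψ, hψ⟩ := Module.projective_lifting_property p.hom (CoextendScalars.equiv _ N φ) hp
    exact ⟨(CoextendScalars.equiv _ M).symm ψ, CoextendScalars.ext hψ⟩

instance restrictScalars_preservesProjectiveObjects [Module.Projective R S] :
    (restrictScalars.{u} (algebraMap R S)).PreservesProjectiveObjects :=
  Functor.preservesProjectiveObjects_of_adjunction_of_preservesEpimorphisms
    (restrictCoextendScalarsAdj.{u, u, u} (algebraMap R S))

lemma extVanish_coextendScalars_iff [Module.Projective R S]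
    (N : ModuleCat.{u} S) (M : ModuleCat.{u} R) (j : ℕ) :
    ExtVanish S N ((coextendScalars (algebraMap R S)).obj M) j ↔
      ExtVanish R ((restrictScalars (algebraMap R S)).obj N) M j := by
  rw [extVanish_iff_isZero, extVanish_iff_isZero]
  exact isZero_ext_rightAdjoint_iff S R
    (restrictCoextendScalarsAdj.{u, u, u} (algebraMap R S)) N M j

lemma injDimLE_coextendScalars_iff [Module.Projective R S] (ε : S →ₐ[R] R)
    (M : ModuleCat.{u} R) (n : ℕ) :
    InjDimLE S ((coextendScalars (algebraMap R S)).obj M) n ↔ InjDimLE R M n := by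
  constructor
  · intro h N j hj
    let N' : ModuleCat.{u} S := (restrictScalars ε.toRingHom).obj N
    let e : (restrictScalars (algebraMap R S)).obj N' ≅ N :=
      (restrictScalarsComp'App _ _ _ ε.comp_algebraMap.symm N).symm ≪≫
        restrictScalarsId'App _ rfl N
    exact (extVanish_congr e (Iso.refl M) j).1
      ((extVanish_coextendScalars_iff N' M j).1 (h N' j hj))
  · intro h N j hj
    exact (extVanish_coextendScalars_iff N M j).2 (h _ j hj)

/-- The `S`-linear map `s ↦ (t ↦ φ (t * s))` from `S` to `Hom_R(S, R)` attached to an `R`-linear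
form `φ` on `S`; it is an isomorphism exactly when `φ` is a Frobenius form. -/
def toCoextendScalars (φ : S →ₗ[R] R) :
    of S S ⟶ (coextendScalars (algebraMap R S)).obj (of R R) :=
  (restrictCoextendScalarsAdj.{u, u, u} (algebraMap R S)).homEquiv (of S S) (of R R) <|
    ofHom (X := (restrictScalars (algebraMap R S)).obj (of S S))
      (φ ∘ₗ (restrictScalarsSelfEquiv R S).symm.toLinearMap)

lemma bijective_toCoextendScalars {φ : S →ₗ[R] R}
    (hφ : Function.Bijective ((LinearMap.mul R S).compr₂ φ)) :
    Function.Bijective (toCoextendScalars φ).hom := by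
  let dualEquiv := (restrictScalarsSelfEquiv R S).congrLeft R R
  let e := (CoextendScalars.equiv (algebraMap R S) (of R R)).symm
  have toCoextend_eq : ⇑(toCoextendScalars φ).hom =
      e ∘ dualEquiv ∘ (LinearMap.mul R S).compr₂ φ := by
    ext s : 1
    refine CoextendScalars.ext (LinearMap.ext fun t : S ↦ ?_)
    exact congrArg φ (mul_comm t s)
  rw [toCoextend_eq]
  exact e.bijective.comp (dualEquiv.bijective.comp hφ)

end ChangeOfRings

section TrivialExtension

open TrivSqZeroExt

variable {R : Type u} [CommRing R]

instance free_trivSqZeroExt {M : Type*} [AddCommGroup M] [Module R M] [Module.Free R M] :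
    Module.Free R (TrivSqZeroExt R M) :=
  inferInstanceAs (Module.Free R (R × M))

lemma bijective_mul_compr₂_sndHom :
    Function.Bijective ((LinearMap.mul R (TrivSqZeroExt R R)).compr₂ (sndHom R R)) := by
  constructor
  · intro s t h
    have fst_eq : s.fst = t.fst := by simpa using LinearMap.congr_fun h (inr 1)
    have snd_eq : s.snd = t.snd := by simpa using LinearMap.congr_fun h 1
    exact TrivSqZeroExt.ext fst_eq snd_eq
  · intro ψ
    refine ⟨inl (ψ (inr 1)) + inr (ψ 1), linearMap_ext (fun r ↦ ?_) fun r ↦ ?_⟩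
    · have inl_eq : (inl r : TrivSqZeroExt R R) = r • 1 := by ext <;> simp
      simp [inl_eq]
    · have inr_eq : (inr r : TrivSqZeroExt R R) = r • inr 1 := by ext <;> simp
      rw [inr_eq, map_smul, map_smul]
      simp

end TrivialExtension

theorem stmt7_general {R S : Type u} [CommRing R] [CommRing S] [Algebra R S]
    [Module.Projective R S] (ε : S →ₐ[R] R) (φ : S →ₗ[R] R)
    (hφ : Function.Bijective ((LinearMap.mul R S).compr₂ φ)) (n : ℕ) :
    InjDimLE S (ModuleCat.of S S) n ↔ InjDimLE R (ModuleCat.of R R) n :=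
  (injDimLE_congr (LinearEquiv.ofBijective _ (bijective_toCoextendScalars hφ)).toModuleIso n).trans
    (injDimLE_coextendScalars_iff ε (ModuleCat.of R R) n)

theorem stmt7 (R : Type u) [CommRing R] (n : ℕ) :
    (∀ (N : ModuleCat.{u} (TrivSqZeroExt R R)) (j : ℕ), n < j →
      ExtVanish (TrivSqZeroExt R R) N
        (ModuleCat.of (TrivSqZeroExt R R) (TrivSqZeroExt R R)) j) ↔
    (∀ (N' : ModuleCat.{u} R) (j : ℕ), n < j →
      ExtVanish R N' (ModuleCat.of R R) j) :=
  stmt7_general (TrivSqZeroExt.fstHom R R R) (TrivSqZeroExt.sndHom R R)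
    bijective_mul_compr₂_sndHom n

end
end
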